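/- arXiv:2206.01391 — 3 statements merged into one kernel-verified Lean document; each statement's English description precedes it below -/
import Mathlib

section
/- Let x ≥ 3.5 be a half-integer (x = m + 1/2 for some positive integer m) and let C = 1284699552/444215525. Then ∑_{p prime, x < p < 3x/2} 1/(p − x) ≤ C + 2·log(log x). -/
open Finset ArithmeticFunction

noncomputable def gS (d : ℕ) : ℝ := ((moebius d : ℤ) : ℝ) ^ 2 / (Nat.totient d : ℝ)
noncomputable def LS (Q : ℕ) : ℝ := ∑ d ∈ Icc 1 Q, gS d
noncomputable def lamS (Q d : ℕ) : ℝ :=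
  ((moebius d : ℤ) : ℝ) * d * (∑ f ∈ (Icc 1 Q) with d ∣ f, gS f) / LS Q

lemma gS_nonneg (d : ℕ) : 0 ≤ gS d := by unfold gS; positivity

lemma gS_one : gS 1 = 1 := by simp [gS]

lemma gS_of_sq {d : ℕ} (h : Squarefree d) : gS d = 1 / (Nat.totient d : ℝ) := by
  unfold gS
  have := ArithmeticFunction.moebius_sq_eq_one_of_squarefree h
  rw [← Int.cast_pow, this]; simp

lemma gS_of_not_sq {d : ℕ} (h : ¬ Squarefree d) : gS d = 0 := by
  unfold gS
  rw [ArithmeticFunction.moebius_eq_zero_of_not_squarefree h]; simp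

lemma gS_mul {a b : ℕ} (h : Nat.Coprime a b) : gS (a * b) = gS a * gS b := by
  unfold gS
  rw [ArithmeticFunction.isMultiplicative_moebius.map_mul_of_coprime h, Nat.totient_mul h]
  push_cast
  rw [mul_pow, mul_div_mul_comm]

lemma LS_pos {Q : ℕ} (hQ : 1 ≤ Q) : 0 < LS Q := by
  have : gS 1 ≤ LS Q := by
    unfold LS
    exact single_le_sum (f := gS) (fun i _ => gS_nonneg i) (by simp [hQ])
  rw [gS_one] at this; linarith

lemma lamS_one {Q : ℕ} (hQ : 1 ≤ Q) : lamS Q 1 = 1 := by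
  unfold lamS
  have : (∑ f ∈ (Icc 1 Q) with 1 ∣ f, gS f) = LS Q := by simp [LS]
  rw [this]
  have := LS_pos hQ
  simp [this.ne']

/-- inner Moebius sum -/
lemma moebius_between {Q f h : ℕ} (hf : 1 ≤ f) (hh : Squarefree h) (hhQ : h ≤ Q) :
    (∑ e ∈ Icc 1 Q with f ∣ e ∧ e ∣ h, ((moebius e : ℤ) : ℝ)) = if h = f then ((moebius f : ℤ) : ℝ) else 0 := by
  have h0 : h ≠ 0 := hh.ne_zero
  by_cases hfh : f ∣ h
  · obtain ⟨k, rfl⟩ := hfh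
    have hk0 : k ≠ 0 := by rintro rfl; simp at h0
    have hset : ((Icc 1 Q).filter fun e => f ∣ e ∧ e ∣ f * k) = (Nat.divisors k).image (fun j => f * j) := by
      ext e
      simp only [mem_filter, mem_Icc, mem_image, Nat.mem_divisors]
      constructor
      · rintro ⟨_, ⟨j, rfl⟩, hj⟩
        exact ⟨j, ⟨Nat.dvd_of_mul_dvd_mul_left (by omega) hj, hk0⟩, rfl⟩
      · rintro ⟨j, ⟨hj, _⟩, rfl⟩
        have hd : f * j ∣ f * k := Nat.mul_dvd_mul_left f hj
        refine ⟨⟨?_, ?_⟩, ⟨j, rfl⟩, hd⟩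
        · exact Nat.pos_of_dvd_of_pos hd (Nat.pos_of_ne_zero h0)
        · exact (Nat.le_of_dvd (Nat.pos_of_ne_zero h0) hd).trans hhQ
    rw [hset, sum_image (by intro a _ b _ hab; exact Nat.eq_of_mul_eq_mul_left (by omega) hab)]
    have hcop : Nat.Coprime f k := (Nat.squarefree_mul_iff.mp hh).1
    have : ∀ j ∈ Nat.divisors k, ((moebius (f * j) : ℤ) : ℝ) = ((moebius f : ℤ) : ℝ) * ((moebius j : ℤ) : ℝ) := by
      intro j hj
      rw [ArithmeticFunction.isMultiplicative_moebius.map_mul_of_coprime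
        (Nat.Coprime.coprime_dvd_right (Nat.dvd_of_mem_divisors hj) hcop)]
      push_cast; rfl
    rw [sum_congr rfl this, ← mul_sum]
    have h2 : (∑ j ∈ Nat.divisors k, ((moebius j : ℤ) : ℝ)) = if k = 1 then 1 else 0 := by
      have h3 : (∑ j ∈ Nat.divisors k, (moebius j : ℤ)) = if k = 1 then 1 else 0 := by
        rw [← ArithmeticFunction.coe_mul_zeta_apply, ArithmeticFunction.moebius_mul_coe_zeta,
          ArithmeticFunction.one_apply]
      exact_mod_cast h3
    rw [h2]
    by_cases hk : k = 1
    · simp [hk]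
    · have : f * k ≠ f := by
        intro h; apply hk; exact Nat.eq_of_mul_eq_mul_left (by omega : 0 < f) (by simpa using h)
      simp [hk, this]
  · have hne : h ≠ f := by rintro rfl; exact hfh dvd_rfl
    rw [if_neg hne, filter_false_of_mem, sum_empty]
    rintro e _ ⟨h1, h2⟩; exact hfh (h1.trans h2)

lemma y_eq {Q f : ℕ} (hf : f ∈ Icc 1 Q) :
    (∑ e ∈ Icc 1 Q with f ∣ e, lamS Q e / e) = ((moebius f : ℤ) : ℝ) * gS f / LS Q := by
  have hf' := mem_Icc.mp hf
  have h1 : (∑ e ∈ Icc 1 Q with f ∣ e, lamS Q e / e)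
      = ∑ e ∈ Icc 1 Q, ∑ h ∈ Icc 1 Q, if f ∣ e ∧ e ∣ h then ((moebius e : ℤ) : ℝ) * gS h / LS Q else 0 := by
    rw [sum_filter]
    refine sum_congr rfl fun e he => ?_
    have he' := mem_Icc.mp he
    by_cases hfe : f ∣ e
    · simp only [hfe, true_and, if_true]
      unfold lamS
      rw [← sum_filter, ← sum_div, ← mul_sum]
      have : (e : ℝ) ≠ 0 := by have := he'.1; positivity
      field_simp
    · simp [hfe]
  rw [h1, sum_comm]
  have h2 : ∀ h ∈ Icc 1 Q, (∑ e ∈ Icc 1 Q, if f ∣ e ∧ e ∣ h then ((moebius e : ℤ) : ℝ) * gS h / LS Q else 0)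
      = if h = f then ((moebius f : ℤ) : ℝ) * gS f / LS Q else 0 := by
    intro h hh
    have hh' := mem_Icc.mp hh
    rw [← sum_filter, ← sum_div, ← sum_mul]
    by_cases hs : Squarefree h
    · rw [moebius_between hf'.1 hs hh'.2]
      by_cases hhf : h = f
      · simp [hhf]
      · simp [hhf]
    · rw [gS_of_not_sq hs]
      by_cases hhf : h = f
      · subst hhf; simp [gS_of_not_sq hs]
      · simp [hhf]
  rw [sum_congr rfl h2, sum_ite_eq' (Icc 1 Q) f, if_pos hf]

lemma quad_eq {Q : ℕ} (hQ : 1 ≤ Q) :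
    (∑ d ∈ Icc 1 Q, ∑ e ∈ Icc 1 Q, lamS Q d * lamS Q e / (Nat.lcm d e : ℝ)) = 1 / LS Q := by
  have h1 : ∀ d ∈ Icc 1 Q, ∀ e ∈ Icc 1 Q, lamS Q d * lamS Q e / (Nat.lcm d e : ℝ)
      = ∑ f ∈ Icc 1 Q, (Nat.totient f : ℝ) * ((if f ∣ d then lamS Q d / d else 0) * (if f ∣ e then lamS Q e / e else 0)) := by
    intro d hd e he
    have hd' := mem_Icc.mp hd
    have he' := mem_Icc.mp he
    have hg : (∑ f ∈ Icc 1 Q with f ∣ d ∧ f ∣ e, (Nat.totient f : ℝ)) = (Nat.gcd d e : ℝ) := by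
      have hs : ((Icc 1 Q).filter fun f => f ∣ d ∧ f ∣ e) = (Nat.gcd d e).divisors := by
        ext f
        simp only [mem_filter, mem_Icc, Nat.mem_divisors, Nat.dvd_gcd_iff]
        constructor
        · rintro ⟨_, h⟩; exact ⟨h, Nat.gcd_ne_zero_left (by omega)⟩
        · rintro ⟨h, _⟩
          exact ⟨⟨Nat.pos_of_dvd_of_pos h.1 (by omega), (Nat.le_of_dvd (by omega) h.1).trans hd'.2⟩, h⟩
      rw [hs]
      exact_mod_cast Nat.sum_totient (Nat.gcd d e)
    have h2 : (∑ f ∈ Icc 1 Q, (Nat.totient f : ℝ) * ((if f ∣ d then lamS Q d / d else 0) * (if f ∣ e then lamS Q e / e else 0)))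
        = (∑ f ∈ Icc 1 Q with f ∣ d ∧ f ∣ e, (Nat.totient f : ℝ)) * ((lamS Q d / d) * (lamS Q e / e)) := by
      rw [sum_filter, sum_mul]
      refine sum_congr rfl fun f _ => ?_
      by_cases a : f ∣ d <;> by_cases b : f ∣ e <;> simp [a, b]
    rw [h2, hg]
    have hgl : (Nat.gcd d e : ℝ) * (Nat.lcm d e : ℝ) = d * e := by exact_mod_cast Nat.gcd_mul_lcm d e
    have hd0 : (d : ℝ) ≠ 0 := by have := hd'.1; positivity
    have he0 : (e : ℝ) ≠ 0 := by have := he'.1; positivity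
    have hl0 : (Nat.lcm d e : ℝ) ≠ 0 := by
      intro h; rw [h, mul_zero] at hgl; exact mul_ne_zero hd0 he0 hgl.symm
    field_simp
    linear_combination (-(lamS Q d * lamS Q e)) * hgl
  rw [sum_congr rfl fun d hd => sum_congr rfl fun e he => h1 d hd e he]
  have h3 : (∑ d ∈ Icc 1 Q, ∑ e ∈ Icc 1 Q, ∑ f ∈ Icc 1 Q, (Nat.totient f : ℝ) * ((if f ∣ d then lamS Q d / d else 0) * (if f ∣ e then lamS Q e / e else 0)))
      = ∑ f ∈ Icc 1 Q, (Nat.totient f : ℝ) * (∑ e ∈ Icc 1 Q with f ∣ e, lamS Q e / e) ^ 2 := by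
    rw [sum_congr rfl fun d _ => sum_comm]
    rw [sum_comm]
    refine sum_congr rfl fun f _ => ?_
    rw [sq, sum_filter, sum_mul_sum, mul_sum]
    refine sum_congr rfl fun d _ => ?_
    rw [mul_sum]
  rw [h3]
  have hL := LS_pos hQ
  have h4 : ∀ f ∈ Icc 1 Q, (Nat.totient f : ℝ) * (∑ e ∈ Icc 1 Q with f ∣ e, lamS Q e / e) ^ 2 = gS f / LS Q ^ 2 := by
    intro f hf
    rw [y_eq hf]
    have hf' := mem_Icc.mp hf
    by_cases hs : Squarefree f
    · have hm : ((moebius f : ℤ) : ℝ) ^ 2 = 1 := by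
        exact_mod_cast ArithmeticFunction.moebius_sq_eq_one_of_squarefree hs
      have ht : (Nat.totient f : ℝ) ≠ 0 := by
        have := Nat.totient_pos.mpr (by omega : 0 < f); positivity
      rw [div_pow, mul_pow, hm, gS_of_sq hs]
      field_simp
    · rw [gS_of_not_sq hs]; simp
  rw [sum_congr rfl h4, ← sum_div]
  change LS Q / _ = _
  field_simp

lemma sum_gS_divisors {d : ℕ} (hd : Squarefree d) :
    (∑ k ∈ d.divisors, gS k) = d / (Nat.totient d : ℝ) := by
  have h1 : ∀ k ∈ d.divisors, gS k = (Nat.totient (d / k) : ℝ) / Nat.totient d := by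
    intro k hk
    obtain ⟨j, rfl⟩ := Nat.dvd_of_mem_divisors hk
    have hc := (Nat.squarefree_mul_iff.mp hd)
    have hk0 : 0 < k := Nat.pos_of_mem_divisors hk
    have hj0 : 0 < j := Nat.pos_of_ne_zero hc.2.2.ne_zero
    rw [gS_of_sq hc.2.1, Nat.mul_div_cancel_left _ hk0, Nat.totient_mul hc.1]
    have a := Nat.totient_pos.mpr hk0
    have b := Nat.totient_pos.mpr hj0
    push_cast
    field_simp
  rw [sum_congr rfl h1, ← sum_div, Nat.sum_div_divisors d (fun k => (Nat.totient k : ℝ))]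
  congr 1
  exact_mod_cast Nat.sum_totient d

lemma lamS_abs {Q : ℕ} (hQ : 1 ≤ Q) (d : ℕ) (hd1 : 1 ≤ d) : |lamS Q d| ≤ 1 := by
  by_cases hs : Squarefree d
  swap
  · unfold lamS; rw [ArithmeticFunction.moebius_eq_zero_of_not_squarefree hs]; simp
  have hL := LS_pos hQ
  have hm : |((moebius d : ℤ) : ℝ)| = 1 := by
    have : ((moebius d : ℤ) : ℝ) ^ 2 = 1 := by
        exact_mod_cast ArithmeticFunction.moebius_sq_eq_one_of_squarefree hs
    rw [← sq_abs] at this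
    nlinarith [abs_nonneg ((moebius d : ℤ) : ℝ)]
  have hsn : 0 ≤ ∑ f ∈ (Icc 1 Q) with d ∣ f, gS f := sum_nonneg fun i _ => gS_nonneg i
  unfold lamS
  rw [abs_div, abs_mul, abs_mul, hm, abs_of_pos hL, abs_of_nonneg hsn, Nat.abs_cast, one_mul,
    div_le_one hL]
  set H := (Icc 1 Q).filter (fun h => d * h ≤ Q ∧ Nat.Coprime d h) with hH
  have h1 : (∑ f ∈ (Icc 1 Q) with d ∣ f, gS f) = gS d * ∑ h ∈ H, gS h := by
    rw [mul_sum]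
    have : ∀ h ∈ H, gS d * gS h = gS (d * h) := by
      intro h hh; rw [gS_mul (mem_filter.mp hh).2.2]
    rw [sum_congr rfl this]
    rw [← sum_image (f := gS) (g := fun h => d * h) (s := H)
      (by intro a _ b _ hab; exact Nat.eq_of_mul_eq_mul_left (by omega) hab)]
    symm
    apply sum_subset
    · intro f hf
      obtain ⟨h, hh, rfl⟩ := mem_image.mp hf
      simp only [hH, mem_filter, mem_Icc] at hh
      simp only [mem_filter, mem_Icc]
      exact ⟨⟨Nat.mul_pos (by omega) (by omega), hh.2.1⟩, ⟨h, rfl⟩⟩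
    · intro f hf hnf
      apply gS_of_not_sq
      intro hsf
      apply hnf
      simp only [mem_filter, mem_Icc] at hf
      obtain ⟨⟨hf1, hf2⟩, h, rfl⟩ := hf
      have hh0 : 0 < h := Nat.pos_of_mul_pos_left hf1
      refine mem_image.mpr ⟨h, ?_, rfl⟩
      simp only [hH, mem_filter, mem_Icc]
      exact ⟨⟨hh0, (Nat.le_mul_of_pos_left h (by omega)).trans hf2⟩, hf2, (Nat.squarefree_mul_iff.mp hsf).1⟩
  have h2 : (d : ℝ) * gS d = ∑ k ∈ d.divisors, gS k := by
    rw [sum_gS_divisors hs, gS_of_sq hs]; ring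
  rw [h1, ← mul_assoc, h2, sum_mul_sum, ← sum_product']
  have h3 : ∀ x ∈ d.divisors ×ˢ H, gS x.1 * gS x.2 = gS (x.1 * x.2) := by
    rintro ⟨k, h⟩ hx
    simp only [mem_product, Nat.mem_divisors, hH, mem_filter] at hx
    exact (gS_mul (Nat.Coprime.coprime_dvd_left hx.1.1 hx.2.2.2)).symm
  rw [sum_congr rfl h3]
  rw [← sum_image (f := gS) (g := fun x : ℕ × ℕ => x.1 * x.2)]
  · unfold LS
    apply sum_le_sum_of_subset_of_nonneg
    · intro f hf
      obtain ⟨⟨k, h⟩, hx, rfl⟩ := mem_image.mp hf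
      simp only [mem_product, Nat.mem_divisors, hH, mem_filter, mem_Icc] at hx
      have hk0 : 0 < k := Nat.pos_of_dvd_of_pos hx.1.1 (by omega)
      simp only [mem_Icc]
      exact ⟨Nat.mul_pos hk0 (by omega), (Nat.mul_le_mul_right h (Nat.le_of_dvd (by omega) hx.1.1)).trans hx.2.2.1⟩
    · intro i _ _; exact gS_nonneg i
  · have key : ∀ k h, k ∣ d → Nat.Coprime d h → Nat.gcd (k * h) d = k := by
      intro k h hk hc
      rw [Nat.Coprime.gcd_mul_right_cancel k hc.symm]
      exact Nat.gcd_eq_left hk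
    rintro ⟨k, h⟩ hx ⟨k', h'⟩ hx' heq
    simp only [coe_product, Set.mem_prod, mem_coe, Nat.mem_divisors, hH, mem_filter, mem_Icc] at hx hx'
    simp only at heq
    have hk : k = k' := by
      rw [← key k h hx.1.1 hx.2.2.2, heq, key k' h' hx'.1.1 hx'.2.2.2]
    subst hk
    have hk0 : 0 < k := Nat.pos_of_dvd_of_pos hx.1.1 (by omega)
    rw [Nat.eq_of_mul_eq_mul_left hk0 heq]

lemma card_mult (m n l : ℕ) (hl : 1 ≤ l) :
    |(((Ioc m (m + n)).filter fun k => l ∣ k).card : ℝ) - n / l| ≤ 1 := by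
  have h0 : ((Ioc m (m + n)).filter fun k => l ∣ k).card + m / l = (m + n) / l := by
    rw [← Nat.Ioc_filter_dvd_card_eq_div m l, ← Nat.Ioc_filter_dvd_card_eq_div (m+n) l, ← card_union_of_disjoint]
    · congr 1
      rw [← filter_union, union_comm, Ioc_union_Ioc_eq_Ioc (by omega) (by omega)]
    · apply disjoint_filter_filter
      rw [Finset.disjoint_left]; intro a ha hb; simp at ha hb; omega
  have h1 : (((Ioc m (m + n)).filter fun k => l ∣ k).card : ℝ) + (m / l : ℕ) = ((m + n) / l : ℕ) := by
    exact_mod_cast h0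
  have hl' : (0 : ℝ) < l := by exact_mod_cast hl
  have a1 : ((m / l : ℕ) : ℝ) ≤ m / l := Nat.cast_div_le
  have a2 : (((m + n) / l : ℕ) : ℝ) ≤ (m + n : ℕ) / l := Nat.cast_div_le
  have a3 : (m : ℝ) / l < (m / l : ℕ) + 1 := by
    rw [div_lt_iff₀ hl']; exact_mod_cast (by linarith [Nat.lt_mul_div_succ m hl, mul_comm l (m / l + 1)] : m < (m / l + 1) * l)
  have a4 : ((m + n : ℕ) : ℝ) / l < ((m + n) / l : ℕ) + 1 := by
    rw [div_lt_iff₀ hl']; exact_mod_cast (by linarith [Nat.lt_mul_div_succ (m + n) hl, mul_comm l ((m + n) / l + 1)] : m + n < ((m + n) / l + 1) * l)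
  have a5 : ((m + n : ℕ) : ℝ) / l = m / l + n / l := by push_cast; rw [add_div]
  rw [abs_le]; constructor <;> linarith

theorem selberg (m n Q : ℕ) (hQ : 1 ≤ Q) (hQm : Q ≤ m) :
    (((Ioc m (m + n)).filter Nat.Prime).card : ℝ) ≤ n / LS Q + (Q : ℝ) ^ 2 := by
  have h1 : (((Ioc m (m + n)).filter Nat.Prime).card : ℝ)
      ≤ ∑ k ∈ Ioc m (m + n), (∑ d ∈ Icc 1 Q with d ∣ k, lamS Q d) ^ 2 := by
    rw [card_filter]
    push_cast
    apply sum_le_sum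
    intro k hk
    by_cases hp : k.Prime
    · have : ((Icc 1 Q).filter fun d => d ∣ k) = {1} := by
        ext d
        simp only [mem_filter, mem_Icc, mem_singleton]
        constructor
        · rintro ⟨⟨_, h⟩, hd⟩
          rcases (Nat.dvd_prime hp).mp hd with h' | h'
          · exact h'
          · have := (mem_Ioc.mp hk).1; omega
        · rintro rfl; simp [hQ]
      rw [this]; simp [hp, lamS_one hQ]
    · simp [hp]; positivity
  refine h1.trans ?_
  have h2 : (∑ k ∈ Ioc m (m + n), (∑ d ∈ Icc 1 Q with d ∣ k, lamS Q d) ^ 2)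
      = ∑ d ∈ Icc 1 Q, ∑ e ∈ Icc 1 Q, lamS Q d * lamS Q e *
        (((Ioc m (m + n)).filter fun k => Nat.lcm d e ∣ k).card : ℝ) := by
    have : ∀ k ∈ Ioc m (m + n), (∑ d ∈ Icc 1 Q with d ∣ k, lamS Q d) ^ 2
        = ∑ d ∈ Icc 1 Q, ∑ e ∈ Icc 1 Q, if Nat.lcm d e ∣ k then lamS Q d * lamS Q e else 0 := by
      intro k _
      rw [sq, sum_filter, sum_mul_sum]
      refine sum_congr rfl fun d _ => sum_congr rfl fun e _ => ?_
      have hiff : Nat.lcm d e ∣ k ↔ d ∣ k ∧ e ∣ k := Nat.lcm_dvd_iff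
      simp only [hiff]
      by_cases a : d ∣ k <;> by_cases b : e ∣ k <;> simp [a, b]
    rw [sum_congr rfl this, sum_comm]
    refine sum_congr rfl fun d _ => ?_
    rw [sum_comm]
    refine sum_congr rfl fun e _ => ?_
    rw [← sum_filter, sum_const, nsmul_eq_mul, mul_comm]
  rw [h2]
  have h3 : ∀ d ∈ Icc 1 Q, ∀ e ∈ Icc 1 Q, lamS Q d * lamS Q e *
        (((Ioc m (m + n)).filter fun k => Nat.lcm d e ∣ k).card : ℝ)
        ≤ n * (lamS Q d * lamS Q e / (Nat.lcm d e : ℝ)) + 1 := by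
    intro d hd e he
    have hd' := mem_Icc.mp hd
    have he' := mem_Icc.mp he
    have hc := card_mult m n (Nat.lcm d e) (Nat.lcm_pos (by omega) (by omega))
    have hl : |lamS Q d * lamS Q e| ≤ 1 := by
      rw [abs_mul]
      exact mul_le_one₀ (lamS_abs hQ d hd'.1) (abs_nonneg _) (lamS_abs hQ e he'.1)
    have : |lamS Q d * lamS Q e * ((((Ioc m (m + n)).filter fun k => Nat.lcm d e ∣ k).card : ℝ) - n / (Nat.lcm d e : ℝ))| ≤ 1 := by
      rw [abs_mul]; exact mul_le_one₀ hl (abs_nonneg _) hc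
    have := (abs_le.mp this).2
    have e1 : (n : ℝ) * (lamS Q d * lamS Q e / (Nat.lcm d e : ℝ)) = lamS Q d * lamS Q e * (n / (Nat.lcm d e : ℝ)) := by ring
    rw [e1]; linarith
  refine (sum_le_sum fun d hd => sum_le_sum fun e he => h3 d hd e he).trans ?_
  simp only [sum_add_distrib, ← mul_sum]
  rw [quad_eq hQ]
  simp
  apply le_of_eq; ring

lemma fiber_bound (Q q : ℕ) :
    (∑ n ∈ Icc 1 Q with ∏ p ∈ n.primeFactors, p = q, (1 : ℝ) / n) ≤ gS q := by
  by_cases hs : Squarefree q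
  swap
  · rw [gS_of_not_sq hs]
    apply le_of_eq
    apply sum_eq_zero
    intro n hn
    exfalso
    apply hs
    rw [← (mem_filter.mp hn).2]
    apply Finset.squarefree_prod_of_pairwise_isCoprime
    · intro a ha b hb hab
      have ha' := Nat.prime_of_mem_primeFactors ha
      have hb' := Nat.prime_of_mem_primeFactors hb
      exact Nat.isCoprime_iff_coprime.mpr ((Nat.coprime_primes ha' hb').mpr hab) |> fun h => by
        simpa [Function.onFun, Nat.coprime_iff_isRelPrime] using (Nat.coprime_primes ha' hb').mpr hab
    · intro a ha
      exact (Nat.prime_of_mem_primeFactors ha).squarefree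
  have hq0 : 0 < q := Nat.pos_of_ne_zero hs.ne_zero
  have hqr : (0 : ℝ) < q := by exact_mod_cast hq0
  let f : ℕ →* ℝ := { toFun := fun n => (n : ℝ)⁻¹, map_one' := by simp, map_mul' := by intro a b; push_cast; rw [mul_inv] }
  have hf : ∀ n, f n = (n : ℝ)⁻¹ := fun n => rfl
  have hsum := (EulerProduct.summable_and_hasSum_factoredNumbers_prod_filter_prime_geometric (f := f)
    (by intro p hp
        rw [hf, norm_inv, Real.norm_natCast]
        exact inv_lt_one_of_one_lt₀ (by exact_mod_cast hp.one_lt)) q.primeFactors).2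
  have hfil : (q.primeFactors.filter Nat.Prime) = q.primeFactors :=
    filter_true_of_mem fun p hp => Nat.prime_of_mem_primeFactors hp
  rw [hfil] at hsum
  have htot : (Nat.totient q : ℝ) = q * ∏ p ∈ q.primeFactors, (1 - (p : ℝ)⁻¹) := by
    have := Nat.totient_eq_mul_prod_factors q
    have h2 : ((Nat.totient q : ℚ) : ℝ) = ((q * ∏ p ∈ q.primeFactors, (1 - (p : ℚ)⁻¹) : ℚ) : ℝ) := by rw [this]
    push_cast at h2
    exact h2
  have hsum2 := (hasSum_subtype_iff_indicator (f := fun n => f n)).mp hsum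
  have hg : gS q = (1 / q) * ∏ p ∈ q.primeFactors, (1 - f p)⁻¹ := by
    rw [gS_of_sq hs, htot, prod_inv_distrib]
    simp only [hf]
    rw [one_div, mul_inv, one_div]
  set F := (Icc 1 Q).filter (fun n => ∏ p ∈ n.primeFactors, p = q) with hF
  have hdvd : ∀ n ∈ F, q ∣ n := by
    intro n hn
    rw [← (mem_filter.mp hn).2]; exact Nat.prod_primeFactors_dvd n
  have hpf : ∀ n ∈ F, n.primeFactors = q.primeFactors := by
    intro n hn
    rw [← (mem_filter.mp hn).2]
    exact (Nat.primeFactors_prod fun p hp => Nat.prime_of_mem_primeFactors hp).symm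
  have hinj : Set.InjOn (fun n => n / q) (F : Set ℕ) := by
    intro a ha b hb hab
    obtain ⟨a', rfl⟩ := hdvd a ha
    obtain ⟨b', rfl⟩ := hdvd b hb
    simp only [Nat.mul_div_cancel_left _ hq0] at hab
    rw [hab]
  have h1 := sum_le_hasSum (F.image (fun n => n / q)) (fun i _ => by
    apply Set.indicator_nonneg
    intro n _; rw [hf]; positivity) hsum2
  rw [sum_image hinj] at h1
  rw [hg]
  calc (∑ n ∈ F, (1 : ℝ) / n)
      = (1 / q) * ∑ n ∈ F, (Nat.factoredNumbers q.primeFactors).indicator (fun n => f n) (n / q) := by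
        rw [mul_sum]
        refine sum_congr rfl fun n hn => ?_
        have hn1 : 1 ≤ n := (mem_Icc.mp (mem_filter.mp hn).1).1
        have hpfn := hpf n hn
        obtain ⟨k, rfl⟩ := hdvd n hn
        have hk0 : k ≠ 0 := by rintro rfl; simp at hn1
        rw [Nat.mul_div_cancel_left _ hq0, Set.indicator_of_mem, hf]
        · push_cast; rw [one_div, mul_inv, one_div]
        · apply Nat.mem_factoredNumbers_of_primeFactors_subset hk0
          rw [← hpfn]
          exact Nat.primeFactors_mono (Dvd.intro_left q rfl) (by omega)
    _ ≤ _ := by gcongr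

lemma LS_ge_harmonic (Q : ℕ) : (harmonic Q : ℝ) ≤ LS Q := by
  rw [harmonic_eq_sum_Icc]
  push_cast
  unfold LS
  have : ∀ n ∈ Icc 1 Q, (∏ p ∈ n.primeFactors, p) ∈ Icc 1 Q := by
    intro n hn
    have hn' := mem_Icc.mp hn
    have hd := Nat.prod_primeFactors_dvd n
    exact mem_Icc.mpr ⟨Nat.pos_of_dvd_of_pos hd (by omega), (Nat.le_of_dvd (by omega) hd).trans hn'.2⟩
  rw [← sum_fiberwise_of_maps_to this]
  apply sum_le_sum
  intro q _
  simpa only [one_div] using fiber_bound Q q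

lemma LS_ge_log (Q : ℕ) (hQ : 6 ≤ Q) : Real.log (Q + 1) + 1 / 2 ≤ LS Q := by
  have h1 := Real.one_half_lt_eulerMascheroniSeq_six
  have h2 := Real.strictMono_eulerMascheroniSeq.monotone hQ
  have h3 := LS_ge_harmonic Q
  have h4 : (1 : ℝ) / 2 < (harmonic Q : ℝ) - Real.log (Q + 1) := h1.trans_le h2
  linarith

/-- number of primes in the window -/
noncomputable def cntP (m i : ℕ) : ℝ := (((Ioc m (m + i)).filter Nat.Prime).card : ℝ)

lemma analytic_ineq {u : ℝ} (hu : 9 ≤ u) :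
    1 / (Real.log 2 + u / 2 - Real.log u + 1 / 2) + 4 / u ^ 2 ≤ 2 / u + 3.3 / (u * √u) := by
  have hs : √u ^ 2 = u := Real.sq_sqrt (by linarith)
  set s := √u with hsdef
  have hs3 : 3 ≤ s := by
    rw [hsdef]; apply Real.le_sqrt_of_sq_le; linarith
  rw [← hs]
  have hlog : Real.log (s ^ 2) ≤ s / 2 - 2 + 4 * Real.log 2 := by
    rw [Real.log_pow]
    have h1 : Real.log (s / 4) ≤ s / 4 - 1 := Real.log_le_sub_one_of_pos (by positivity)
    rw [Real.log_div (by positivity) (by norm_num)] at h1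
    have h4 : Real.log 4 = 2 * Real.log 2 := by
      rw [show (4 : ℝ) = 2 ^ 2 by norm_num, Real.log_pow]; norm_num
    push_cast
    linarith
  have hl2 := Real.log_two_lt_d9
  have hden : (s ^ 2 - s + 0.84) / 2 ≤ Real.log 2 + s ^ 2 / 2 - Real.log (s ^ 2) + 1 / 2 := by linarith
  have hpos : 0 < s ^ 2 - s + 0.84 := by nlinarith
  have h1 : 1 / (Real.log 2 + s ^ 2 / 2 - Real.log (s ^ 2) + 1 / 2) ≤ 1 / ((s ^ 2 - s + 0.84) / 2) :=
    one_div_le_one_div_of_le (by positivity) hden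
  have h2 : 1 / ((s ^ 2 - s + 0.84) / 2) + 4 / (s ^ 2) ^ 2 ≤ 2 / s ^ 2 + 3.3 / (s ^ 2 * s) := by
    have hsp : 0 < s := by linarith
    have hpoly : 0 ≤ 1.3 * s ^ 3 - 5.62 * s ^ 2 + 6.772 * s - 3.36 := by
      nlinarith [mul_nonneg (sub_nonneg.mpr hs3) (sub_nonneg.mpr hs3), mul_nonneg (mul_nonneg (sub_nonneg.mpr hs3) (sub_nonneg.mpr hs3)) (sub_nonneg.mpr hs3)]
    have e : 2 / s ^ 2 + 3.3 / (s ^ 2 * s) - (1 / ((s ^ 2 - s + 0.84) / 2) + 4 / (s ^ 2) ^ 2)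
        = (1.3 * s ^ 3 - 5.62 * s ^ 2 + 6.772 * s - 3.36) / (s ^ 4 * (s ^ 2 - s + 0.84)) := by
      have hne := hpos.ne'
      obtain ⟨D, hD⟩ : ∃ D, D = s ^ 2 - s + 0.84 := ⟨_, rfl⟩
      rw [← hD] at hne ⊢
      field_simp
      rw [hD]
      ring
    have : 0 ≤ (1.3 * s ^ 3 - 5.62 * s ^ 2 + 6.772 * s - 3.36) / (s ^ 4 * (s ^ 2 - s + 0.84)) := by positivity
    linarith
  linarith

lemma cntP_selberg {m n : ℕ} (hmn : n ≤ m) (hn : 9 ≤ Real.log n) :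
    cntP m n ≤ n * (2 / Real.log n + 3.3 / (Real.log n * √(Real.log n))) := by
  set u := Real.log n with hu
  have hn0 : (0 : ℝ) < n := by
    rcases Nat.eq_zero_or_pos n with h | h
    · rw [h] at hu; simp at hu; linarith
    · exact_mod_cast h
  have hexp : Real.exp (u / 2) = √n := by
    rw [Real.sqrt_eq_rpow, Real.rpow_def_of_pos hn0, ← hu]; ring_nf
  have hsq : 3 * u ≤ √n := by
    rw [← hexp, show u / 2 = u / 4 + u / 4 by ring, Real.exp_add]
    have := Real.quadratic_le_exp_of_nonneg (show 0 ≤ u / 4 by linarith)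
    have h5 : 1 + u / 4 + (u / 4) ^ 2 / 2 ≥ 0.64 * u := by nlinarith
    have h6 : 0.64 * u ≤ Real.exp (u / 4) := by linarith
    nlinarith
  set z := 2 * √n / u with hz
  have hz6 : 6 ≤ z := by
    rw [hz, le_div_iff₀ (by linarith)]; linarith
  have hQ6 : 6 ≤ ⌊z⌋₊ := Nat.le_floor (by exact_mod_cast hz6)
  have hn1 : (1 : ℝ) ≤ n := by exact_mod_cast Nat.one_le_iff_ne_zero.mpr (by rintro h; rw [h] at hn0; simp at hn0)
  have hzn : z ≤ n := by
    have h7 : √n ≤ n := by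
      rw [Real.sqrt_le_left hn0.le]; nlinarith
    have : z ≤ √n := by
      rw [hz, div_le_iff₀ (by linarith)]; nlinarith [Real.sqrt_nonneg (n : ℝ)]
    linarith
  have hQn : ⌊z⌋₊ ≤ n := Nat.floor_le_of_le hzn
  have hsel := selberg m n ⌊z⌋₊ (by omega) (by omega)
  have hL := LS_ge_log ⌊z⌋₊ hQ6
  have hlt := Nat.lt_floor_add_one z
  have hlogz : Real.log z = Real.log 2 + u / 2 - Real.log u := by
    rw [hz, ← hexp, Real.log_div (by positivity) (by linarith), Real.log_mul (by norm_num) (by positivity), Real.log_exp]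
  have hlz : Real.log z ≤ Real.log (⌊z⌋₊ + 1) := Real.log_le_log (by linarith) hlt.le
  have hzpos : 0 < Real.log z := Real.log_pos (by linarith)
  have hfl : (⌊z⌋₊ : ℝ) ≤ z := Nat.floor_le (by linarith)
  have h1 : (n : ℝ) / LS ⌊z⌋₊ ≤ n * (1 / (Real.log 2 + u / 2 - Real.log u + 1 / 2)) := by
    rw [← hlogz, mul_one_div]
    apply div_le_div_of_nonneg_left hn0.le (by linarith); linarith
  have h2 : (⌊z⌋₊ : ℝ) ^ 2 ≤ n * (4 / u ^ 2) := by
    have : (⌊z⌋₊ : ℝ) ^ 2 ≤ z ^ 2 := by gcongr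
    have e : z ^ 2 = n * (4 / u ^ 2) := by
      rw [hz, div_pow, mul_pow, Real.sq_sqrt hn0.le]; ring
    linarith
  have h3 := mul_le_mul_of_nonneg_left (analytic_ineq hn) hn0.le
  rw [mul_add] at h3
  unfold cntP
  linarith

lemma cntP_zero (m : ℕ) : cntP m 0 = 0 := by simp [cntP]

lemma cntP_succ (m i : ℕ) : cntP m (i + 1) = cntP m i + if (m + i + 1).Prime then 1 else 0 := by
  unfold cntP
  rw [card_filter, card_filter, ← add_assoc, sum_Ioc_succ_top (by omega)]
  push_cast; rfl

lemma cntP_wheel (m : ℕ) (hm : 3 ≤ m) (i : ℕ) :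
    cntP m i ≤ (((m + i + 5) / 6 + (m + i + 1) / 6 - ((m + 5) / 6 + (m + 1) / 6) : ℕ) : ℝ) := by
  induction i with
  | zero => rw [cntP_zero]; positivity
  | succ i ih =>
    rw [cntP_succ]
    by_cases hp : (m + i + 1).Prime
    · have h2 : ¬ 2 ∣ (m + i + 1) := by
        intro h; have := (Nat.prime_dvd_prime_iff_eq Nat.prime_two hp).mp h; omega
      have h3 : ¬ 3 ∣ (m + i + 1) := by
        intro h; have := (Nat.prime_dvd_prime_iff_eq Nat.prime_three hp).mp h; omega
      have h6 : (m + i + 1) % 6 = 1 ∨ (m + i + 1) % 6 = 5 := by omega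
      have : (m + (i + 1) + 5) / 6 + (m + (i + 1) + 1) / 6 - ((m + 5) / 6 + (m + 1) / 6)
          = ((m + i + 5) / 6 + (m + i + 1) / 6 - ((m + 5) / 6 + (m + 1) / 6)) + 1 := by
        rcases h6 with h6 | h6 <;> omega
      rw [this, if_pos hp]
      push_cast
      linarith
    · rw [if_neg hp, add_zero]
      refine ih.trans ?_
      exact_mod_cast (by omega)

lemma cntP_third (m : ℕ) (hm : 3 ≤ m) (i : ℕ) : cntP m i ≤ i / 3 + 1 := by
  have h := cntP_wheel m hm i
  have h2 : 3 * ((m + i + 5) / 6 + (m + i + 1) / 6 - ((m + 5) / 6 + (m + 1) / 6)) ≤ i + 3 := by omega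
  have h3 : (3 : ℝ) * (((m + i + 5) / 6 + (m + i + 1) / 6 - ((m + 5) / 6 + (m + 1) / 6) : ℕ) : ℝ) ≤ i + 3 := by
    exact_mod_cast h2
  linarith

lemma cntP_le_one (m : ℕ) (hm : 3 ≤ m) (i : ℕ) (hi : i ≤ 2) : cntP m i ≤ 1 := by
  have h := cntP_wheel m hm i
  have h2 : ((m + i + 5) / 6 + (m + i + 1) / 6 - ((m + 5) / 6 + (m + 1) / 6)) ≤ 1 := by omega
  have h3 : (((m + i + 5) / 6 + (m + i + 1) / 6 - ((m + 5) / 6 + (m + 1) / 6) : ℕ) : ℝ) ≤ 1 := by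
    exact_mod_cast h2
  linarith

noncomputable def TS (m n : ℕ) : ℝ := ∑ i ∈ range n, cntP m i / ((i : ℝ) ^ 2 - 1 / 4)

lemma half_ne (n : ℕ) : (n : ℝ) - 1 / 2 ≠ 0 := by
  intro h
  have : ((2 * n : ℕ) : ℝ) = (1 : ℕ) := by push_cast; linarith
  have := Nat.cast_injective this
  omega

lemma abel_sum (m n : ℕ) :
    (∑ p ∈ Ioc m (m + n), if p.Prime then 1 / ((p : ℝ) - (m + 1 / 2)) else 0)
      = cntP m n / (n - 1 / 2) + TS m n := by
  induction n with
  | zero => simp [cntP_zero, TS]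
  | succ n ih =>
    rw [← add_assoc, sum_Ioc_succ_top (by omega), ih, TS, TS, sum_range_succ, cntP_succ]
    have h1 := half_ne n
    have h2 : (n : ℝ) + 1 / 2 ≠ 0 := by positivity
    have h3 : (n : ℝ) ^ 2 - 1 / 4 = (n - 1 / 2) * (n + 1 / 2) := by ring
    have h4 : ((n + 1 : ℕ) : ℝ) - 1 / 2 = n + 1 / 2 := by push_cast; ring
    have h5 : ((m + n + 1 : ℕ) : ℝ) - (m + 1 / 2) = n + 1 / 2 := by push_cast; ring
    rw [h3, h4, h5]
    have h6 : cntP m n / ((n : ℝ) - 1 / 2) = cntP m n / (n + 1 / 2) + cntP m n / ((n - 1 / 2) * (n + 1 / 2)) := by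
      rw [div_add_div _ _ h2 (mul_ne_zero h1 h2), div_eq_div_iff h1 (mul_ne_zero h2 (mul_ne_zero h1 h2))]
      ring
    rw [h6]
    by_cases hp : (m + n + 1).Prime
    · rw [if_pos hp, if_pos hp]; ring
    · rw [if_neg hp, if_neg hp]; ring

lemma log_step {i : ℕ} (hi : 2 ≤ i) :
    (i : ℝ) / ((i : ℝ) ^ 2 - 1 / 4) ≤ Real.log i - Real.log ((i : ℝ) - 1) := by
  have hi' : (2 : ℝ) ≤ i := by exact_mod_cast hi
  have h := Real.le_log_one_add_of_nonneg (x := 1 / ((i : ℝ) - 1)) (by apply div_nonneg <;> linarith)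
  have h0 : (i : ℝ) - 1 ≠ 0 := by linarith
  have e1 : 1 + 1 / ((i : ℝ) - 1) = i / (i - 1) := by field_simp; ring
  rw [e1, Real.log_div (by linarith) h0] at h
  refine le_trans ?_ h
  have e2 : 2 * (1 / ((i : ℝ) - 1)) / (1 / ((i : ℝ) - 1) + 2) = 1 / (i - 1 / 2) := by
    have : (i : ℝ) - 1 / 2 ≠ 0 := by linarith
    have : 1 + ((i : ℝ) - 1) * 2 ≠ 0 := by linarith
    field_simp; ring
  rw [e2, div_le_div_iff₀ (by nlinarith) (by linarith)]
  nlinarith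

lemma TS_succ (m n : ℕ) : TS m (n + 1) = TS m n + cntP m n / ((n : ℝ) ^ 2 - 1 / 4) := by
  simp [TS, sum_range_succ]

lemma TS_two (m : ℕ) (hm : 3 ≤ m) : TS m 2 ≤ 4 / 3 := by
  have h1 := cntP_le_one m hm 1 (by norm_num)
  simp only [TS, sum_range_succ, sum_range_zero, cntP_zero]
  norm_num
  linarith

lemma TS_three (m : ℕ) (hm : 3 ≤ m) : TS m 3 ≤ 1.6 := by
  have h1 := TS_two m hm
  have h2 := cntP_le_one m hm 2 (by norm_num)
  rw [TS_succ]
  norm_num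
  linarith

lemma TS_small (m : ℕ) (hm : 3 ≤ m) (n : ℕ) (hn : 3 ≤ n) :
    TS m n ≤ 2 + (1 / 3) * (Real.log ((n : ℝ) - 1) - Real.log 2) - 1 / ((n : ℝ) - 1 / 2) := by
  induction n, hn using Nat.le_induction with
  | base => have := TS_three m hm; norm_num; norm_num at this; linarith
  | succ n hn ih =>
    have hn' : (3 : ℝ) ≤ n := by exact_mod_cast hn
    rw [TS_succ]
    have h1 := log_step (i := n) (by omega)
    have h2 := cntP_third m hm n
    have hp : 0 < (n : ℝ) ^ 2 - 1 / 4 := by nlinarith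
    have h3 : cntP m n / ((n : ℝ) ^ 2 - 1 / 4) ≤ (n / 3 + 1) / ((n : ℝ) ^ 2 - 1 / 4) := by gcongr
    have h4 : ((n : ℝ) / 3 + 1) / ((n : ℝ) ^ 2 - 1 / 4) = (1 / 3) * (n / ((n : ℝ) ^ 2 - 1 / 4)) + (1 / (n - 1 / 2) - 1 / (n + 1 / 2)) := by
      have a : (n : ℝ) - 1 / 2 ≠ 0 := half_ne n
      have b : (n : ℝ) + 1 / 2 ≠ 0 := by positivity
      rw [show (n : ℝ) ^ 2 - 1 / 4 = (n - 1 / 2) * (n + 1 / 2) by ring]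
      rw [div_sub_div _ _ a b, ← mul_div_assoc, ← add_div]
      congr 1
      ring
    have h5 : ((n + 1 : ℕ) : ℝ) - 1 = n := by push_cast; ring
    have h6 : ((n + 1 : ℕ) : ℝ) - 1 / 2 = n + 1 / 2 := by push_cast; ring
    rw [h5, h6]
    linarith

noncomputable def GS (u : ℝ) : ℝ := 2 * Real.log u - 6.6 / √u

lemma GS_step {a b : ℝ} (ha : 0 < a) (hab : a ≤ b) :
    (2 / b + 3.3 / (b * √b)) * (b - a) ≤ GS b - GS a := by
  have hb : 0 < b := by linarith
  have h1 : (b - a) / b ≤ Real.log b - Real.log a := by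
    have := Real.log_le_sub_one_of_pos (show 0 < a / b by positivity)
    rw [Real.log_div ha.ne' hb.ne'] at this
    have e : (b - a) / b = 1 - a / b := by field_simp
    linarith
  have h2 : 3.3 / (b * √b) * (b - a) ≤ 6.6 / √a - 6.6 / √b := by
    have hsa : 0 < √a := Real.sqrt_pos.mpr ha
    have hsb : 0 < √b := Real.sqrt_pos.mpr hb
    have hs : √a ≤ √b := Real.sqrt_le_sqrt hab
    have ea : a = √a ^ 2 := (Real.sq_sqrt ha.le).symm
    have eb : b = √b ^ 2 := (Real.sq_sqrt hb.le).symm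
    set s := √a
    set t := √b
    rw [ea, eb]
    have e : 6.6 / s - 6.6 / t - 3.3 / (t ^ 2 * t) * (t ^ 2 - s ^ 2)
        = 3.3 * (t - s) ^ 2 * (2 * t + s) / (t ^ 3 * s) := by
      field_simp; ring
    have : 0 ≤ 3.3 * (t - s) ^ 2 * (2 * t + s) / (t ^ 3 * s) := by positivity
    linarith
  unfold GS
  have e3 : (2 / b + 3.3 / (b * √b)) * (b - a) = 2 * ((b - a) / b) + 3.3 / (b * √b) * (b - a) := by
    ring
  linarith

lemma log8192 : Real.log 8192 = 13 * Real.log 2 := by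
  rw [show (8192 : ℝ) = 2 ^ 13 by norm_num, Real.log_pow]; norm_num

lemma TS_large (m : ℕ) (hm : 3 ≤ m) (n : ℕ) (hn : 8193 ≤ n) (hnm : n ≤ m) :
    TS m n ≤ 2 + 4 * Real.log 2 + GS (Real.log ((n : ℝ) - 1)) - GS (Real.log 8192) := by
  induction n, hn using Nat.le_induction with
  | base =>
    have := TS_small m hm 8193 (by norm_num)
    norm_num at this ⊢
    rw [log8192] at this
    linarith
  | succ n hn ih =>
    have ih := ih (by omega)
    have hn' : (8193 : ℝ) ≤ n := by exact_mod_cast hn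
    rw [TS_succ]
    have hl2 := Real.log_two_gt_d9
    have hbase : Real.log 8192 ≤ Real.log ((n : ℝ) - 1) := Real.log_le_log (by norm_num) (by linarith)
    have hmono : Real.log ((n : ℝ) - 1) ≤ Real.log n := Real.log_le_log (by linarith) (by linarith)
    rw [log8192] at hbase
    have hu9 : 9 ≤ Real.log n := by linarith
    have h1 := log_step (i := n) (by omega)
    have h2 := cntP_selberg (m := m) (n := n) (by omega) hu9
    have hp : 0 < (n : ℝ) ^ 2 - 1 / 4 := by nlinarith
    have h3 : cntP m n / ((n : ℝ) ^ 2 - 1 / 4) ≤ (n * (2 / Real.log n + 3.3 / (Real.log n * √(Real.log n)))) / ((n : ℝ) ^ 2 - 1 / 4) := by gcongr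
    have h4 : (n * (2 / Real.log n + 3.3 / (Real.log n * √(Real.log n)))) / ((n : ℝ) ^ 2 - 1 / 4)
        = (2 / Real.log n + 3.3 / (Real.log n * √(Real.log n))) * (n / ((n : ℝ) ^ 2 - 1 / 4)) := by ring
    have hg0 : 0 ≤ 2 / Real.log n + 3.3 / (Real.log n * √(Real.log n)) := by positivity
    have h5 := mul_le_mul_of_nonneg_left h1 hg0
    have h6 := GS_step (a := Real.log ((n : ℝ) - 1)) (b := Real.log n) (by linarith) hmono
    have h7 : ((n + 1 : ℕ) : ℝ) - 1 = n := by push_cast; ring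
    rw [h7]
    linarith

lemma main_bound (m n : ℕ) (hm : 3 ≤ m) (hn : n = (m + 1) / 2) (x : ℝ) (hx : x = m + 1 / 2) :
    cntP m n / (n - 1 / 2) + TS m n ≤ (1284699552 : ℝ) / 444215525 + 2 * Real.log (Real.log x) := by
  have hm' : (3 : ℝ) ≤ m := by exact_mod_cast hm
  have hC : (2.892 : ℝ) ≤ (1284699552 : ℝ) / 444215525 := by norm_num
  have hl2 := Real.log_two_gt_d9
  have hl2' := Real.log_two_lt_d9
  have hn2 : 2 ≤ n := by omega
  have hn2' : (2 : ℝ) ≤ n := by exact_mod_cast hn2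
  have hxn : 2 * (n : ℝ) - 1 / 2 ≤ x := by
    have : 2 * n ≤ m + 1 := by omega
    have : (2 : ℝ) * n ≤ m + 1 := by exact_mod_cast this
    linarith
  have hlx1 : 1 ≤ Real.log x := by
    rw [Real.le_log_iff_exp_le (by linarith)]
    have := Real.exp_one_lt_d9
    linarith
  have hll0 : 0 ≤ Real.log (Real.log x) := Real.log_nonneg hlx1
  rcases Nat.lt_or_ge n 3 with h3 | h3
  · have : n = 2 := by omega
    rw [this]
    have h1 := TS_two m hm
    have h2 := cntP_le_one m hm 2 (by norm_num)
    have h3 : cntP m 2 / (((2 : ℕ) : ℝ) - 1 / 2) ≤ 1 / (((2 : ℕ) : ℝ) - 1 / 2) := by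
      apply div_le_div_of_nonneg_right h2; norm_num
    norm_num at h3 ⊢
    norm_num at hC
    linarith
  have h3' : (3 : ℝ) ≤ n := by exact_mod_cast h3
  have hwx : Real.log ((n : ℝ) - 1) + Real.log 2 ≤ Real.log x := by
    rw [← Real.log_mul (by linarith) (by norm_num)]
    apply Real.log_le_log <;> linarith
  have hnp : 0 < (n : ℝ) - 1 / 2 := by linarith
  rcases Nat.lt_or_ge n 8193 with h4 | h4
  · have hT := TS_small m hm n h3
    have hA := cntP_third m hm n
    have hA' : cntP m n / ((n : ℝ) - 1 / 2) ≤ (n / 3 + 1) / (n - 1 / 2) := by gcongr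
    have hA2 : ((n : ℝ) / 3 + 1) / (n - 1 / 2) ≤ 0.4 + 1 / (n - 1 / 2) := by
      rw [add_div]
      have : (n : ℝ) / 3 / (n - 1 / 2) ≤ 0.4 := by
        rw [div_le_iff₀ hnp]; linarith
      linarith
    have hw9 : Real.log ((n : ℝ) - 1) ≤ 13 * Real.log 2 := by
      rw [← log8192]
      apply Real.log_le_log (by linarith)
      have : (n : ℝ) ≤ 8192 := by exact_mod_cast (by omega)
      linarith
    set w := Real.log ((n : ℝ) - 1)
    rcases le_or_gt w 2 with hw | hw
    · linarith
    rcases le_or_gt w 6 with hw' | hw'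
    · have : Real.log 2 ≤ Real.log (Real.log x) := Real.log_le_log (by norm_num) (by linarith)
      linarith
    · have : Real.log (2 ^ 2) ≤ Real.log (Real.log x) := Real.log_le_log (by norm_num) (by linarith)
      rw [Real.log_pow] at this
      push_cast at this
      linarith
  · have h4' : (8193 : ℝ) ≤ n := by exact_mod_cast h4
    have hT := TS_large m hm n h4 (by omega)
    have hbase : Real.log 8192 ≤ Real.log ((n : ℝ) - 1) := Real.log_le_log (by norm_num) (by linarith)
    have hmono : Real.log ((n : ℝ) - 1) ≤ Real.log n := Real.log_le_log (by linarith) (by linarith)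
    have hb9 : 9 ≤ Real.log 8192 := by rw [log8192]; linarith
    have hA := cntP_selberg (m := m) (n := n) (by omega) (by linarith)
    have hG8 : 6 * Real.log 2 - 2.2 ≤ GS (Real.log 8192) := by
      unfold GS
      have a1 : Real.log (2 ^ 3) ≤ Real.log (Real.log 8192) := Real.log_le_log (by norm_num) (by linarith)
      rw [Real.log_pow] at a1
      push_cast at a1
      have a2 : 3 ≤ √(Real.log 8192) := Real.le_sqrt_of_sq_le (by linarith)
      have a3 : 6.6 / √(Real.log 8192) ≤ 2.2 := by
        rw [div_le_iff₀ (by linarith)]; linarith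
      linarith
    have hGn : GS (Real.log ((n : ℝ) - 1)) ≤ GS (Real.log n) := by
      have h := GS_step (a := Real.log ((n : ℝ) - 1)) (b := Real.log n) (by linarith) hmono
      have : 0 ≤ (2 / Real.log n + 3.3 / (Real.log n * √(Real.log n))) * (Real.log n - Real.log ((n : ℝ) - 1)) := by
        apply mul_nonneg
        · have : 0 < Real.log n := by linarith
          positivity
        · linarith
      linarith
    have hlogn : Real.log (Real.log n) ≤ Real.log (Real.log x) := by
      apply Real.log_le_log (by linarith)
      apply Real.log_le_log <;> linarith
    have hbd : cntP m n / ((n : ℝ) - 1 / 2) ≤ 6.6 / √(Real.log n) := by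
      have hu : 9 ≤ Real.log n := by linarith
      set u := Real.log n
      have hs : √u ^ 2 = u := Real.sq_sqrt (by linarith)
      have hs3 : 3 ≤ √u := Real.le_sqrt_of_sq_le (by linarith)
      rw [div_le_iff₀ hnp]
      refine hA.trans ?_
      have b1 : 2 / u + 3.3 / (u * √u) ≤ 3.3 / √u := by
        rw [← hs] 
        set s := √u
        have hsp : 0 < s := by linarith
        rw [Real.sqrt_sq hsp.le]
        have e : 3.3 / s - (2 / s ^ 2 + 3.3 / (s ^ 2 * s)) = (3.3 * s ^ 2 - 2 * s - 3.3) / s ^ 3 := by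
          field_simp
          ring
        have : 0 ≤ (3.3 * s ^ 2 - 2 * s - 3.3) / s ^ 3 := by
          apply div_nonneg _ (by positivity)
          nlinarith
        linarith
      calc (n : ℝ) * (2 / u + 3.3 / (u * √u)) ≤ n * (3.3 / √u) := by gcongr
        _ ≤ (2 * (n - 1 / 2)) * (3.3 / √u) := by
          apply mul_le_mul_of_nonneg_right _ (by positivity); linarith
        _ = _ := by ring
    have hGd : GS (Real.log n) = 2 * Real.log (Real.log n) - 6.6 / √(Real.log n) := rfl
    linarith

/-- The upper sum over primes: `∑_{x < p < 3x/2} 1/(p-x) ≤ C + 2 log log x`. -/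
theorem upper_prime_sum_bound (x : ℝ)
    (hx : ∃ m : ℕ, 0 < m ∧ x = m + 1 / 2) (hx' : 3.5 ≤ x) :
    (∑' p : ℕ, if p.Prime ∧ x < (p : ℝ) ∧ (p : ℝ) < 3 * x / 2 then
        1 / ((p : ℝ) - x) else 0)
    ≤ (1284699552 : ℝ) / 444215525 + 2 * Real.log (Real.log x) := by
  obtain ⟨m, hm0, hxm⟩ := hx
  have hm : 3 ≤ m := by
    have : (3 : ℝ) ≤ m := by norm_num at hx'; linarith
    exact_mod_cast this
  set n := (m + 1) / 2 with hn
  have key : ∀ p : ℕ, (x < (p : ℝ) ∧ (p : ℝ) < 3 * x / 2) ↔ p ∈ Ioc m (m + n) := by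
    intro p
    rw [mem_Ioc, hxm]
    constructor
    · rintro ⟨h1, h2⟩
      have a : m < p := by
        have : (m : ℝ) < p := by linarith
        exact_mod_cast this
      have b : 4 * p < 6 * m + 3 := by
        have : (4 : ℝ) * p < 6 * m + 3 := by linarith
        exact_mod_cast this
      omega
    · rintro ⟨h1, h2⟩
      have a : (m : ℝ) + 1 ≤ p := by exact_mod_cast h1
      have b : 4 * p ≤ 6 * m + 2 := by omega
      have b' : (4 : ℝ) * p ≤ 6 * m + 2 := by exact_mod_cast b
      constructor <;> linarith
  have hts : (∑' p : ℕ, if p.Prime ∧ x < (p : ℝ) ∧ (p : ℝ) < 3 * x / 2 then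
        1 / ((p : ℝ) - x) else 0)
      = ∑ p ∈ Ioc m (m + n), if p.Prime then 1 / ((p : ℝ) - (m + 1 / 2)) else 0 := by
    rw [tsum_eq_sum (s := Ioc m (m + n))]
    · refine sum_congr rfl fun p hp => ?_
      have := (key p).mpr hp
      simp only [this, and_true, ← hxm]
    · intro p hp
      rw [if_neg]
      rintro ⟨_, h⟩
      exact hp ((key p).mp h)
  rw [hts, abel_sum]
  exact main_bound m n hm hn x hxm
end

section
/- Let x ≥ 3.5 be a half-integer (x = m + 1/2 for some positive integer m). Then the sum over all pairs (p, k) with p prime and k ≥ 2 an integer such that x/2 < p^k < 3x/2 of 1/(k·|x − p^k|) is at most log(log x) + γ + 2·log 2 + log 2.4 + 7/156 + ((π² − 6)/(3·√(2x)))·((1/2)·log x − (3/2)·log 2 + γ + 3/7) + ((π² − 6)/(6·√x))·((1/2)·log x − 2·log 2 + γ + 3/7). -/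
lemma sum_half (S : Finset ℕ) : ∑ i ∈ S, 1 / ((i:ℝ) + 1/2)^2 ≤ 4.945 := by
  have h : ∀ n : ℕ, ∑ i ∈ Finset.range (n+2), 1 / ((i:ℝ) + 1/2)^2 ≤ 4.945 - 1/((n:ℝ)+2) := by
    intro n
    induction n with
    | zero => norm_num [Finset.sum_range_succ]
    | succ n ih =>
      rw [Finset.sum_range_succ]
      have : 1 / (((n+2:ℕ):ℝ) + 1/2)^2 ≤ 1/((n:ℝ)+2) - 1/((n:ℝ)+3) := by
        have hn : (0:ℝ) ≤ n := n.cast_nonneg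
        rw [div_sub_div _ _ (by positivity) (by positivity), div_le_div_iff₀ (by positivity) (by positivity)]
        push_cast
        nlinarith
      push_cast at *
      have e : (n:ℝ)+1+2 = n+3 := by ring
      rw [e]
      linarith
  have hs : S ⊆ Finset.range (S.sup id + 2) := by
    intro i hi
    have := Finset.le_sup (f := id) hi
    simp at this ⊢
    omega
  calc _ ≤ ∑ i ∈ Finset.range (S.sup id + 2), 1 / ((i:ℝ) + 1/2)^2 :=
        Finset.sum_le_sum_of_subset_of_nonneg hs (fun _ _ _ => by positivity)
    _ ≤ _ := h _
    _ ≤ _ := by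
      have : (0:ℝ) ≤ 1/(((S.sup id : ℕ):ℝ)+2) := by positivity
      linarith

lemma sum_sq (S : Finset ℕ) (h : ∀ k ∈ S, 2 ≤ k) :
    ∑ k ∈ S, 1 / (k:ℝ)^2 ≤ Real.pi^2/6 - 1 := by
  have h1 : 1 ∉ S := fun h' => by have := h 1 h'; omega
  have := sum_le_hasSum (insert 1 S) (fun i _ => by positivity) hasSum_zeta_two
  rw [Finset.sum_insert h1] at this
  norm_num at this ⊢
  linarith

lemma sum_harm (S : Finset ℕ) (y L : ℝ) (h1 : ∀ k ∈ S, 1 ≤ k) (h2 : ∀ k ∈ S, (k:ℝ) ≤ y)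
    (hL : 0 ≤ L) (hy : 1 + Real.log y ≤ L) :
    ∑ k ∈ S, 1 / (k:ℝ) ≤ L := by
  rcases S.eq_empty_or_nonempty with rfl | ⟨a, ha⟩
  · simpa
  have hy1 : 1 ≤ y := le_trans (by exact_mod_cast h1 a ha) (h2 a ha)
  refine le_trans ?_ ((harmonic_floor_le_one_add_log y hy1).trans hy)
  rw [harmonic_eq_sum_Icc]
  push_cast
  simp only [one_div]
  apply Finset.sum_le_sum_of_subset_of_nonneg
  · intro i hi
    simp only [Finset.mem_Icc]
    exact ⟨h1 i hi, Nat.le_floor (h2 i hi)⟩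
  · intros; positivity

lemma side (T : Finset (ℕ × ℕ)) (D : ℕ × ℕ → ℕ) (e : ℕ → ℕ → ℕ) (s y L : ℝ)
    (hs : 0 < s) (hL : 0 ≤ L) (hy : 1 + Real.log y ≤ L)
    (hk : ∀ q ∈ T, 2 ≤ q.2) (hD : Set.InjOn D T)
    (h : ∀ p P k, (p, k) ∈ T → (P, k) ∈ T → p ≠ P → D (P, k) ≤ D (p, k) →
      1 ≤ e p P ∧ (e p P : ℝ) ≤ y ∧ (e p P : ℝ) * k * s ≤ D (p, k) + 1 / 2)
    (he : ∀ p p' P k, (p, k) ∈ T → (p', k) ∈ T → (P, k) ∈ T → D (P, k) ≤ D (p, k) →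
      D (P, k) ≤ D (p', k) → e p P = e p' P → p = p') :
    ∑ q ∈ T, 1 / ((q.2 : ℝ) * (D q + 1 / 2)) ≤ 1.79 + (Real.pi ^ 2 / 6 - 1) * (L / s) := by
  classical
  set K := T.image Prod.snd with hK
  have hK2 : ∀ k ∈ K, 2 ≤ k := by
    intro k hk'
    obtain ⟨q, hq, rfl⟩ := Finset.mem_image.1 hk'
    exact hk q hq
  have hP : ∀ k, ∃ P, k ∈ K → ((P, k) ∈ T ∧ ∀ p, (p, k) ∈ T → D (P, k) ≤ D (p, k)) := by
    intro k
    by_cases hk' : k ∈ K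
    · have hne : (T.filter (fun q => q.2 = k)).Nonempty := by
        obtain ⟨q, hq, hqk⟩ := Finset.mem_image.1 hk'
        exact ⟨q, by simp [hq, hqk]⟩
      obtain ⟨⟨P, k'⟩, h1, h2⟩ := Finset.exists_min_image _ D hne
      simp only [Finset.mem_filter] at h1 h2
      obtain ⟨h1, rfl⟩ := h1
      exact ⟨P, fun _ => ⟨h1, fun p hp => h2 (p, k') ⟨hp, rfl⟩⟩⟩
    · exact ⟨0, fun h => absurd h hk'⟩
  choose P hP using hP
  have key : ∀ k ∈ K, ∑ q ∈ T with q.2 = k, 1 / ((q.2 : ℝ) * (D q + 1 / 2)) ≤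
      1 / ((k : ℝ) * (D (P k, k) + 1 / 2)) + 1 / (k:ℝ)^2 * (L / s) := by
    intro k hkK
    obtain ⟨hPT, hmin⟩ := hP k hkK
    have hk0 : (0:ℝ) < k := by have := hK2 k hkK; exact_mod_cast (by omega : 0 < k)
    have hmem : (P k, k) ∈ T.filter (fun q => q.2 = k) := by simp [hPT]
    rw [← Finset.add_sum_erase _ _ hmem]
    gcongr
    set U := (T.filter (fun q => q.2 = k)).erase (P k, k) with hU
    have hUm : ∀ q ∈ U, ∃ p, q = (p, k) ∧ (p, k) ∈ T ∧ p ≠ P k := by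
      rintro ⟨p, k'⟩ hq
      simp only [hU, Finset.mem_erase, Finset.mem_filter] at hq
      obtain ⟨h1, h2, rfl⟩ := hq
      exact ⟨p, rfl, h2, fun h => h1 (by rw [h])⟩
    have hb : ∀ q ∈ U, 1 / ((q.2 : ℝ) * (D q + 1 / 2)) ≤
        1 / (k:ℝ)^2 * (1 / s) * (1 / (e q.1 (P k) : ℝ)) := by
      intro q hq
      obtain ⟨p, rfl, hp, hne⟩ := hUm q hq
      obtain ⟨a1, a2, a3⟩ := h p (P k) k hp hPT hne (hmin p hp)
      have he0 : (0:ℝ) < e p (P k) := by exact_mod_cast a1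
      rw [one_div_mul_one_div, one_div_mul_one_div]
      apply one_div_le_one_div_of_le (by positivity)
      calc (k:ℝ)^2 * s * e p (P k) = k * (e p (P k) * k * s) := by ring
        _ ≤ _ := by gcongr
    refine (Finset.sum_le_sum hb).trans ?_
    rw [← Finset.mul_sum, mul_assoc]
    gcongr
    rw [one_div_mul_eq_div]
    gcongr
    have hinj : Set.InjOn (fun q : ℕ × ℕ => e q.1 (P k)) U := by
      intro q hq q' hq' hqq
      obtain ⟨p, rfl, hp, hne⟩ := hUm q hq
      obtain ⟨p', rfl, hp', hne'⟩ := hUm q' hq'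
      rw [he p p' (P k) k hp hp' hPT (hmin p hp) (hmin p' hp') hqq]
    rw [← Finset.sum_image (f := fun j : ℕ => 1 / (j:ℝ)) hinj]
    apply sum_harm _ y L _ _ hL hy
    · intro j hj
      obtain ⟨q, hq, rfl⟩ := Finset.mem_image.1 hj
      obtain ⟨p, rfl, hp, hne⟩ := hUm q hq
      exact (h p (P k) k hp hPT hne (hmin p hp)).1
    · intro j hj
      obtain ⟨q, hq, rfl⟩ := Finset.mem_image.1 hj
      obtain ⟨p, rfl, hp, hne⟩ := hUm q hq
      exact (h p (P k) k hp hPT hne (hmin p hp)).2.1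
  rw [← Finset.sum_fiberwise_of_maps_to (t := K) (g := Prod.snd)
    (fun q hq => Finset.mem_image_of_mem _ hq)]
  refine (Finset.sum_le_sum key).trans ?_
  rw [Finset.sum_add_distrib, ← Finset.sum_mul]
  have hsq := sum_sq K hK2
  have hnear : ∑ k ∈ K, 1 / ((k : ℝ) * (D (P k, k) + 1 / 2)) ≤
      ∑ k ∈ K, (1.4 * (1 / (k:ℝ)^2) + 1 / 5.6 * (1 / ((D (P k, k) : ℝ) + 1 / 2)^2)) := by
    apply Finset.sum_le_sum
    intro k _
    rw [← one_div_mul_one_div, ← one_div_pow, ← one_div_pow]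
    set a := 1 / (k:ℝ)
    set b := 1 / ((D (P k, k) : ℝ) + 1 / 2)
    nlinarith [sq_nonneg (2.8 * a - b)]
  rw [Finset.sum_add_distrib, ← Finset.mul_sum, ← Finset.mul_sum] at hnear
  have hinj : Set.InjOn (fun k => D (P k, k)) K := by
    intro k hk k' hk' hkk
    have := hD (hP k hk).1 (hP k' hk').1 hkk
    exact (Prod.mk.inj this).2
  have hh := sum_half (K.image (fun k => D (P k, k)))
  rw [Finset.sum_image hinj] at hh
  have hpi : Real.pi^2/6 - 1 ≤ 0.645 := by nlinarith [Real.pi_lt_d4, Real.pi_gt_three]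
  have : (∑ k ∈ K, 1 / (k:ℝ)^2) * (L/s) ≤ (Real.pi ^ 2 / 6 - 1) * (L / s) := by gcongr
  norm_num at *
  linarith

lemma pow_gap (v u : ℝ) (hv : 0 ≤ v) (huv : v ≤ u) (k : ℕ) :
    (u - v) * (k + 1) * v ^ k ≤ u ^ (k+1) - v ^ (k+1) := by
  induction k with
  | zero => simp
  | succ k ih =>
    have h1 : v^(k+1) ≤ u^(k+1) := by gcongr
    have h2 := mul_le_mul_of_nonneg_left ih hv
    have h3 := mul_le_mul_of_nonneg_left h1 (sub_nonneg.2 huv)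
    push_cast
    rw [pow_succ u (k+1), pow_succ v (k+1)]
    have h4 : v * ((u - v) * (k + 1) * v ^ k) = (u-v)*(k+1)*v^(k+1) := by ring
    nlinarith

/-- Spacing of two `k`-th powers above `w`. -/
lemma far_gap (v u k : ℕ) (w : ℝ) (hv : 1 ≤ v) (huv : v < u) (hk : 2 ≤ k)
    (hw : w ≤ (v:ℝ)^k) : ((u - v : ℕ) : ℝ) * k * Real.sqrt w ≤ (u:ℝ)^k - (v:ℝ)^k := by
  obtain ⟨j, rfl⟩ : ∃ j, k = j + 1 := ⟨k - 1, by omega⟩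
  have hv1 : (1:ℝ) ≤ v := by exact_mod_cast hv
  have huv' : (v:ℝ) ≤ u := by exact_mod_cast huv.le
  refine le_trans ?_ (pow_gap v u (by positivity) huv' j)
  rw [Nat.cast_sub huv.le]
  push_cast
  have : Real.sqrt w ≤ (v:ℝ)^j := by
    rw [Real.sqrt_le_left (by positivity), ← pow_mul]
    exact hw.trans (pow_le_pow_right₀ hv1 (by omega))
  have : (0:ℝ) ≤ u - v := by linarith
  gcongr

lemma ratio_sq (v u k : ℕ) (c : ℝ) (hc : 0 < c) (hv : 1 ≤ v) (huv : v < u) (hk : 2 ≤ k)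
    (h : (u:ℝ)^k < c * (v:ℝ)^k) : (u:ℝ)^2 < c * (v:ℝ)^2 := by
  obtain ⟨j, rfl⟩ : ∃ j, k = j + 2 := ⟨k - 2, by omega⟩
  by_contra! hn
  have huv' : (v:ℝ) ≤ u := by exact_mod_cast huv.le
  have h1 : (v:ℝ)^j ≤ (u:ℝ)^j := by gcongr
  have : (c * (v:ℝ)^2) * (v:ℝ)^j ≤ (u:ℝ)^2 * (u:ℝ)^j := by gcongr
  rw [pow_add, pow_add] at h
  nlinarith

lemma sq_le_pow (u k : ℕ) (hu : 1 ≤ u) (hk : 2 ≤ k) : (u:ℝ)^2 ≤ (u:ℝ)^k :=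
  pow_le_pow_right₀ (by exact_mod_cast hu) hk

lemma inj_pp {p q k l : ℕ} (hp : p.Prime) (hq : q.Prime) (hk : 2 ≤ k) (hl : 2 ≤ l)
    (h : p ^ k = q ^ l) : p = q ∧ k = l := by
  obtain ⟨j, rfl⟩ : ∃ j, k = j + 1 := ⟨k - 1, by omega⟩
  obtain ⟨i, rfl⟩ : ∃ j, l = j + 1 := ⟨l - 1, by omega⟩
  have := Nat.Prime.pow_inj hp hq h
  omega

lemma const_bound : 2.79 ≤ Real.eulerMascheroniConstant + 2 * Real.log 2
        + Real.log 2.4 + 7 / 156 ∧ 0.8598 ≤ Real.log 2.4 := by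
  have h1 := Real.one_half_lt_eulerMascheroniConstant
  have h2 := Real.log_two_gt_d9
  have h3 : Real.log 2.4 = Real.log 2 + Real.log 1.2 := by
    rw [← Real.log_mul (by norm_num) (by norm_num)]; norm_num
  have h4 := Real.one_sub_inv_le_log_of_pos (show (0:ℝ) < 1.2 by norm_num)
  norm_num at *
  constructor <;> linarith

lemma small_case (x : ℝ) (m : ℕ) (hm : x = m + 1 / 2) (hx' : 3.5 ≤ x) (hx2 : x ≤ 13) :
    (∑' pk : ℕ × ℕ,
        if pk.1.Prime ∧ 2 ≤ pk.2 ∧ x / 2 < (pk.1 : ℝ) ^ pk.2 ∧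
            (pk.1 : ℝ) ^ pk.2 < 3 * x / 2 then
          1 / (pk.2 * |x - (pk.1 : ℝ) ^ pk.2|)
        else 0) ≤ 2.75 := by
  rw [tsum_eq_sum (s := {(2,2),(2,3),(3,2),(2,4)})]
  · have hm1 : m < 13 := by
      have : (m:ℝ) < 13 := by linarith
      exact_mod_cast this
    have hm2 : 3 ≤ m := by
      have : (3:ℝ) ≤ m := by norm_num at hx'; linarith
      exact_mod_cast this
    subst hm
    rw [Finset.sum_insert (by decide), Finset.sum_insert (by decide),
      Finset.sum_insert (by decide), Finset.sum_singleton]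
    interval_cases m <;> norm_num [Nat.prime_two, Nat.prime_three, abs_of_pos, abs_of_neg]
  · rintro ⟨p, k⟩ hpk
    rw [if_neg]
    rintro ⟨hp, hk, h1, h2⟩
    apply hpk
    simp only at hp hk h1 h2
    have h3 : p ^ k < 20 := by
      have : ((p^k : ℕ):ℝ) < 20 := by push_cast; linarith
      exact_mod_cast this
    have hp2 := hp.two_le
    have hp5 : p < 5 := by
      by_contra! h
      have : 5^2 ≤ p^k := (Nat.pow_le_pow_left h 2).trans (Nat.pow_le_pow_right (by omega) hk)
      omega
    have hk5 : k < 5 := by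
      by_contra! h
      have : 2^5 ≤ p^k := (Nat.pow_le_pow_left hp2 5).trans (Nat.pow_le_pow_right (by omega) h)
      omega
    interval_cases p <;> interval_cases k <;> revert hp h3 <;> norm_num

lemma below (x : ℝ) (m : ℕ) (hm : x = m + 1 / 2) (hx : 13 ≤ x) (T : Finset (ℕ × ℕ))
    (hT : ∀ q ∈ T, q.1.Prime ∧ 2 ≤ q.2 ∧ x / 2 < (q.1:ℝ)^q.2 ∧ q.1^q.2 ≤ m) :
    ∑ q ∈ T, 1 / ((q.2:ℝ) * |x - (q.1 : ℝ)^q.2|) ≤ 1.79 +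
      (Real.pi ^ 2 - 6) / (3 * Real.sqrt (2 * x)) *
          (1 / 2 * Real.log x - 3 / 2 * Real.log 2
            + Real.eulerMascheroniConstant + 3 / 7) := by
  have hx0 : 0 < x := by linarith
  have hg := Real.one_half_lt_eulerMascheroniConstant
  have hl2 := Real.log_two_gt_d9
  have hl2' := Real.log_two_lt_d9
  set L := 1 / 2 * Real.log x - 3 / 2 * Real.log 2
            + Real.eulerMascheroniConstant + 3 / 7 with hLdef
  have hlx : 3 * Real.log 2 ≤ Real.log x := by
    have : Real.log ((2:ℝ)^3) ≤ Real.log x := Real.log_le_log (by norm_num) (by linarith)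
    rw [Real.log_pow] at this
    exact_mod_cast this
  have hs := side T (fun q => m - q.1^q.2) (fun p P => P - p) (Real.sqrt (x/2))
    (0.3 * Real.sqrt x) L (by positivity) (by rw [hLdef]; linarith) (by
      rw [Real.log_mul (by norm_num) (by positivity), Real.log_sqrt hx0.le]
      have h3 : Real.log 0.3 = Real.log 1.2 - 2 * Real.log 2 := by
        have : (0.3:ℝ) = 1.2 / 2^2 := by norm_num
        rw [this, Real.log_div (by norm_num) (by norm_num), Real.log_pow]; norm_num
      have h4 := Real.log_le_sub_one_of_pos (show (0:ℝ) < 1.2 by norm_num)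
      rw [hLdef, h3]
      norm_num at *
      linarith) (fun q hq => (hT q hq).2.1) (by
      intro q hq q' hq' h
      obtain ⟨a1, a2, a3, a4⟩ := hT q hq
      obtain ⟨b1, b2, b3, b4⟩ := hT q' hq'
      have h' : m - q.1^q.2 = m - q'.1^q'.2 := h
      have := inj_pp a1 b1 a2 b2 (by omega)
      exact Prod.ext this.1 this.2) (by
      intro p P k hp hP hne hle
      obtain ⟨a1, a2, a3, a4⟩ := hT _ hp
      obtain ⟨b1, b2, b3, b4⟩ := hT _ hP
      simp only at *
      have hle' : p^k ≤ P^k := by omega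
      have hlt : p < P :=
        lt_of_le_of_ne ((Nat.pow_le_pow_iff_left (by omega)).1 hle') hne
      have a4' : (p:ℝ)^k ≤ m := by exact_mod_cast a4
      have b4' : (P:ℝ)^k ≤ m := by exact_mod_cast b4
      have g := far_gap p P k (x/2) a1.one_lt.le hlt a2 a3.le
      have r := ratio_sq p P k 2 (by norm_num) a1.one_lt.le hlt a2 (by linarith)
      have t := sq_le_pow P k b1.one_lt.le a2
      have ht : (P:ℝ) ≤ Real.sqrt x := Real.le_sqrt_of_sq_le (by linarith)
      refine ⟨by omega, ?_, ?_⟩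
      · rw [Nat.cast_sub hlt.le]
        have : 0.7 * (P:ℝ) ≤ p := by
          by_contra! hc
          have : (0:ℝ) ≤ p := by positivity
          norm_num at hc
          nlinarith
        norm_num at *
        linarith
      · rw [Nat.cast_sub a4]
        push_cast
        linarith) (by
      intro p p' P k hp hp' hP h1 h2 h3
      obtain ⟨a1, a2, a3, a4⟩ := hT _ hp
      obtain ⟨c1, c2, c3, c4⟩ := hT _ hp'
      obtain ⟨b1, b2, b3, b4⟩ := hT _ hP
      simp only at *
      have := (Nat.pow_le_pow_iff_left (by omega)).1 (show p^k ≤ P^k by omega)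
      have := (Nat.pow_le_pow_iff_left (by omega)).1 (show p'^k ≤ P^k by omega)
      omega)
  have e1 : (Real.pi ^ 2 / 6 - 1) * (L / Real.sqrt (x/2)) =
      (Real.pi ^ 2 - 6) / (3 * Real.sqrt (2 * x)) * L := by
    have : Real.sqrt (2*x) = 2 * Real.sqrt (x/2) := by
      rw [show 2 * x = 2^2 * (x/2) by ring, Real.sqrt_mul (by norm_num), Real.sqrt_sq (by norm_num)]
    rw [this]
    have : Real.sqrt (x/2) ≠ 0 := by positivity
    field_simp
    ring
  rw [← e1]
  refine le_trans (le_of_eq ?_) hs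
  apply Finset.sum_congr rfl
  intro q hq
  obtain ⟨a1, a2, a3, a4⟩ := hT _ hq
  have a4' : (q.1:ℝ)^q.2 ≤ m := by exact_mod_cast a4
  rw [Nat.cast_sub a4, abs_of_pos (by linarith), hm]
  push_cast
  ring_nf

lemma above (x : ℝ) (m : ℕ) (hm : x = m + 1 / 2) (hx : 13 ≤ x) (T : Finset (ℕ × ℕ))
    (hT : ∀ q ∈ T, q.1.Prime ∧ 2 ≤ q.2 ∧ (q.1:ℝ)^q.2 < 3 * x / 2 ∧ m + 1 ≤ q.1^q.2) :
    ∑ q ∈ T, 1 / ((q.2:ℝ) * |x - (q.1 : ℝ)^q.2|) ≤ 1.79 +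
      (Real.pi ^ 2 - 6) / (6 * Real.sqrt x) *
          (1 / 2 * Real.log x - 2 * Real.log 2
            + Real.eulerMascheroniConstant + 3 / 7) := by
  have hx0 : 0 < x := by linarith
  have hg := Real.one_half_lt_eulerMascheroniConstant
  have hl2 := Real.log_two_gt_d9
  have hl2' := Real.log_two_lt_d9
  set L := 1 / 2 * Real.log x - 2 * Real.log 2
            + Real.eulerMascheroniConstant + 3 / 7 with hLdef
  have hlx : 3 * Real.log 2 ≤ Real.log x := by
    have : Real.log ((2:ℝ)^3) ≤ Real.log x := Real.log_le_log (by norm_num) (by linarith)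
    rw [Real.log_pow] at this
    exact_mod_cast this
  have hs := side T (fun q => q.1^q.2 - (m + 1)) (fun p P => p - P) (Real.sqrt x)
    (0.228 * Real.sqrt x) L (by positivity) (by rw [hLdef]; linarith) (by
      rw [Real.log_mul (by norm_num) (by positivity), Real.log_sqrt hx0.le]
      have h3 : Real.log 0.228 = Real.log 0.912 - 2 * Real.log 2 := by
        have : (0.228:ℝ) = 0.912 / 2^2 := by norm_num
        rw [this, Real.log_div (by norm_num) (by norm_num), Real.log_pow]; norm_num
      have h4 := Real.log_le_sub_one_of_pos (show (0:ℝ) < 0.912 by norm_num)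
      rw [hLdef, h3]
      norm_num at *
      linarith) (fun q hq => (hT q hq).2.1) (by
      intro q hq q' hq' h
      obtain ⟨a1, a2, a3, a4⟩ := hT q hq
      obtain ⟨b1, b2, b3, b4⟩ := hT q' hq'
      have h' : q.1^q.2 - (m + 1) = q'.1^q'.2 - (m + 1) := h
      have := inj_pp a1 b1 a2 b2 (by omega)
      exact Prod.ext this.1 this.2) (by
      intro p P k hp hP hne hle
      obtain ⟨a1, a2, a3, a4⟩ := hT _ hp
      obtain ⟨b1, b2, b3, b4⟩ := hT _ hP
      simp only at *
      have hle' : P^k ≤ p^k := by omega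
      have hlt : P < p :=
        lt_of_le_of_ne ((Nat.pow_le_pow_iff_left (by omega)).1 hle') hne.symm
      have a4' : (m:ℝ) + 1 ≤ (p:ℝ)^k := by exact_mod_cast a4
      have b4' : (m:ℝ) + 1 ≤ (P:ℝ)^k := by exact_mod_cast b4
      have g := far_gap P p k x b1.one_lt.le hlt a2 (by linarith)
      have r := ratio_sq P p k 1.5 (by norm_num) b1.one_lt.le hlt a2 (by norm_num; linarith)
      have t := sq_le_pow p k a1.one_lt.le a2
      refine ⟨by omega, ?_, ?_⟩
      · rw [Nat.cast_sub hlt.le]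
        have : 0.815 * (p:ℝ) ≤ P := by
          by_contra! hc
          have : (0:ℝ) ≤ P := by positivity
          norm_num at hc r
          nlinarith
        have ht : (0.185 / 0.228) * (p:ℝ) ≤ Real.sqrt x := Real.le_sqrt_of_sq_le (by
          rw [mul_pow]
          norm_num
          linarith)
        norm_num at *
        linarith
      · rw [Nat.cast_sub a4]
        push_cast
        linarith) (by
      intro p p' P k hp hp' hP h1 h2 h3
      obtain ⟨a1, a2, a3, a4⟩ := hT _ hp
      obtain ⟨c1, c2, c3, c4⟩ := hT _ hp'
      obtain ⟨b1, b2, b3, b4⟩ := hT _ hP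
      simp only at *
      have := (Nat.pow_le_pow_iff_left (by omega)).1 (show P^k ≤ p^k by omega)
      have := (Nat.pow_le_pow_iff_left (by omega)).1 (show P^k ≤ p'^k by omega)
      omega)
  have e1 : (Real.pi ^ 2 / 6 - 1) * (L / Real.sqrt x) =
      (Real.pi ^ 2 - 6) / (6 * Real.sqrt x) * L := by
    have : Real.sqrt x ≠ 0 := by positivity
    field_simp
  rw [← e1]
  refine le_trans (le_of_eq ?_) hs
  apply Finset.sum_congr rfl
  intro q hq
  obtain ⟨a1, a2, a3, a4⟩ := hT _ hq
  have a4' : (m:ℝ) + 1 ≤ (q.1:ℝ)^q.2 := by exact_mod_cast a4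
  rw [Nat.cast_sub a4, abs_of_neg (by linarith), hm]
  push_cast
  ring_nf

/-- The prime-power estimate of Section 3.4: the sum of `1/(k |x - p^k|)` over
prime powers `p^k` with `k ≥ 2` and `x/2 < p^k < 3x/2` is at most
`S_near + S_far⁻ + S_far⁺` bounds combined. -/
theorem prime_power_sum_bound (x : ℝ)
    (hx : ∃ m : ℕ, 0 < m ∧ x = m + 1 / 2) (hx' : 3.5 ≤ x) :
    (∑' pk : ℕ × ℕ,
        if pk.1.Prime ∧ 2 ≤ pk.2 ∧ x / 2 < (pk.1 : ℝ) ^ pk.2 ∧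
            (pk.1 : ℝ) ^ pk.2 < 3 * x / 2 then
          1 / (pk.2 * |x - (pk.1 : ℝ) ^ pk.2|)
        else 0)
    ≤ Real.log (Real.log x) + Real.eulerMascheroniConstant + 2 * Real.log 2
        + Real.log 2.4 + 7 / 156
      + (Real.pi ^ 2 - 6) / (3 * Real.sqrt (2 * x)) *
          (1 / 2 * Real.log x - 3 / 2 * Real.log 2
            + Real.eulerMascheroniConstant + 3 / 7)
      + (Real.pi ^ 2 - 6) / (6 * Real.sqrt x) *
          (1 / 2 * Real.log x - 2 * Real.log 2
            + Real.eulerMascheroniConstant + 3 / 7) := by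

  obtain ⟨m, -, hm⟩ := hx
  obtain ⟨hc1, hc2⟩ := const_bound
  have hg := Real.one_half_lt_eulerMascheroniConstant
  have hl2 := Real.log_two_gt_d9
  have hl2' := Real.log_two_lt_d9
  have hx0 : 0 < x := by norm_num at hx'; linarith
  have hpi : 0 ≤ Real.pi ^ 2 - 6 := by nlinarith [Real.pi_gt_three]
  rcases le_total x 13 with hx2 | hx2
  · have hs := small_case x m hm hx' hx2
    have hlog : 1 + 1 / 6 ≤ Real.log x := by
      have h1 : Real.log 3.5 ≤ Real.log x := Real.log_le_log (by norm_num) hx'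
      have h2 : Real.log 3.5 = 2 * Real.log 2 + Real.log (7/8) := by
        rw [show (3.5:ℝ) = 2^2 * (7/8) by norm_num, Real.log_mul (by norm_num) (by norm_num),
          Real.log_pow]; norm_num
      have h3 := Real.one_sub_inv_le_log_of_pos (show (0:ℝ) < 7/8 by norm_num)
      norm_num at *
      linarith
    have hll : 0 ≤ Real.log (Real.log x) := Real.log_nonneg (by linarith)
    have t1 : 0 ≤ (Real.pi ^ 2 - 6) / (3 * Real.sqrt (2 * x)) *
          (1 / 2 * Real.log x - 3 / 2 * Real.log 2
            + Real.eulerMascheroniConstant + 3 / 7) :=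
      mul_nonneg (by positivity) (by linarith)
    have t2 : 0 ≤ (Real.pi ^ 2 - 6) / (6 * Real.sqrt x) *
          (1 / 2 * Real.log x - 2 * Real.log 2
            + Real.eulerMascheroniConstant + 3 / 7) :=
      mul_nonneg (by positivity) (by linarith)
    have : (2.75:ℝ) ≤ 2.79 := by norm_num
    linarith
  · have hlog : 2.4 ≤ Real.log x := by
      have h1 : Real.log ((2:ℝ)^(7/2:ℝ)) ≤ Real.log x := by
        apply Real.log_le_log (by positivity)
        rw [show ((7:ℝ)/2) = 3 + 1/2 by norm_num, Real.rpow_add (by norm_num),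
          ← Real.sqrt_eq_rpow]
        have : Real.sqrt 2 ≤ 1.5 := by
          rw [Real.sqrt_le_left (by norm_num)]; norm_num
        norm_num at *
        linarith
      rw [Real.log_rpow (by norm_num)] at h1
      norm_num at *
      linarith
    have hll : Real.log 2.4 ≤ Real.log (Real.log x) := Real.log_le_log (by norm_num) hlog
    set c : ℕ × ℕ → Prop := fun pk => pk.1.Prime ∧ 2 ≤ pk.2 ∧ x / 2 < (pk.1 : ℝ) ^ pk.2 ∧
            (pk.1 : ℝ) ^ pk.2 < 3 * x / 2 with hc
    classical
    set B := Finset.range (2 * m + 2) ×ˢ Finset.range (2 * m + 2) with hB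
    rw [tsum_eq_sum (s := B)]
    · rw [← Finset.sum_filter,
        ← Finset.sum_filter_add_sum_filter_not _ (fun q : ℕ × ℕ => q.1 ^ q.2 ≤ m)]
      have h1 := below x m hm hx2
        ((B.filter (fun q => c q)).filter (fun q : ℕ × ℕ => q.1 ^ q.2 ≤ m)) (by
          intro q hq
          simp only [Finset.mem_filter, hc] at hq
          tauto)
      have h2 := above x m hm hx2
        ((B.filter (fun q => c q)).filter (fun q : ℕ × ℕ => ¬ q.1 ^ q.2 ≤ m)) (by
          intro q hq
          simp only [Finset.mem_filter, hc, not_le] at hq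
          exact ⟨hq.1.2.1, hq.1.2.2.1, hq.1.2.2.2.2, hq.2⟩)
      refine (add_le_add h1 h2).trans ?_
      have : (1.79:ℝ) + 1.79 ≤ 2.79 + 0.8598 := by norm_num
      linarith
    · rintro ⟨p, k⟩ hpk
      rw [if_neg]
      rintro ⟨hp, hk, h1, h2⟩
      apply hpk
      simp only at hp hk h1 h2
      have h3 : p ^ k < 2 * m + 2 := by
        have : ((p^k : ℕ):ℝ) < (2 * m + 2 : ℕ) := by push_cast; linarith
        exact_mod_cast this
      have h4 : p ≤ p ^ k := Nat.le_self_pow (by omega) p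
      have h5 : k < p ^ k := Nat.lt_pow_self hp.one_lt
      simp only [hB, Finset.mem_product, Finset.mem_range]
      omega
end

section
/- Let x ≥ 3.5 be a half-integer (x = m + 1/2 for some positive integer m) and let T ≥ 1/log(3/2). Then the series ∑_{n=2}^∞ (x/n)^{1/log x} · (Λ(n)/(n·log n)) · min{1, 1/(T·|log(x/n)|)} is strictly less than (1/T)·(40.22465·log(log x) + 58.11106 + 3.86972/log x + 5.21918·(log x)/√x − 1.85268/√x). -/
open ArithmeticFunction in
lemma far_bound (L : ℝ) (hL : 0 < L) (N : ℕ) :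
    ∑ n ∈ Finset.range N, Λ n / ((n:ℝ) ^ (1 + 1 / L) * Real.log n) ≤ Real.log (1 + L) := by
  have hs : 1 < 1 + 1 / L := by have := one_div_pos.mpr hL; linarith
  have h0 : ∀ n : ℕ, 0 ≤ Λ n / ((n:ℝ) ^ (1 + 1 / L) * Real.log n) := fun n =>
    div_nonneg vonMangoldt_nonneg (mul_nonneg (by positivity) (Real.log_natCast_nonneg n))
  have hsum : Summable (fun n : ℕ => Λ n / ((n:ℝ) ^ (1 + 1 / L) * Real.log n)) := by
    refine Summable.of_nonneg_of_le h0 (fun n => ?_) (Real.summable_one_div_nat_rpow.mpr hs)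
    rcases Nat.lt_or_ge n 2 with h | h
    · interval_cases n <;> simp
      positivity
    · have hl : 0 < Real.log n := Real.log_pos (by exact_mod_cast h)
      have hp : 0 < (n:ℝ) ^ (1 + 1 / L) := Real.rpow_pos_of_pos (by positivity) _
      rw [div_le_div_iff₀ (by positivity) hp]
      have := vonMangoldt_le_log (n := n)
      nlinarith
  refine (hsum.sum_le_tsum _ (fun n _ => h0 n)).trans ?_
  rw [← log_riemannZeta_eq hs]
  have hz := ZetaAsymptotics.zeta_limit_aux1 hs
  have ht : 0 ≤ ZetaAsymptotics.termTSum (1 + 1 / L) :=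
    tsum_nonneg fun n => ZetaAsymptotics.term_nonneg _ _
  have hre : (riemannZeta ((1 + 1 / L : ℝ) : ℂ)).re = ∑' n : ℕ, 1 / (n + 1 : ℝ) ^ (1 + 1 / L) := by
    rw [zeta_eq_tsum_one_div_nat_add_one_cpow (by simpa using hL)]
    rw [← Complex.ofReal_re (∑' n : ℕ, 1 / (n + 1 : ℝ) ^ (1 + 1 / L)), Complex.ofReal_tsum]
    congr 2
    ext n
    push_cast
    rw [Complex.ofReal_cpow (by positivity)]
    push_cast
    rfl
  have hle : (riemannZeta ((1 + 1 / L : ℝ) : ℂ)).re ≤ 1 + L := by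
    rw [hre]
    have h1 : 1 / (1 + 1 / L - 1) = L := by field_simp; simp
    rw [h1] at hz
    nlinarith
  have hpos : 0 < (riemannZeta ((1 + 1 / L : ℝ) : ℂ)).re := by
    rw [hre]
    have hsm : Summable (fun n : ℕ => 1 / (n + 1 : ℝ) ^ (1 + 1 / L)) := by
      have := (summable_nat_add_iff 1).mpr (Real.summable_one_div_nat_rpow.mpr hs)
      simpa using this
    exact hsm.tsum_pos (fun n => by positivity) 0 (by simp)
  exact Real.log_le_log hpos hle

section Sieve
open ArithmeticFunction Finset
open scoped ArithmeticFunction.Moebius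

noncomputable def sS (R : ℕ) : ℝ := ∑ k ∈ Icc 1 R, ((μ k : ℤ) : ℝ) ^ 2 / (Nat.totient k : ℝ)

noncomputable def sY (R k : ℕ) : ℝ := ((μ k : ℤ) : ℝ) / (Nat.totient k : ℝ) / sS R

noncomputable def sLam (R d : ℕ) : ℝ :=
  d * ∑ k ∈ Icc 1 R, if d ∣ k then ((μ (k / d) : ℤ) : ℝ) * sY R k else 0

lemma sS_pos (R : ℕ) (hR : 1 ≤ R) : 0 < sS R := by
  refine sum_pos' (fun k _ => by positivity) ⟨1, by simp [hR], by simp⟩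

lemma sLam_one (R : ℕ) (hR : 1 ≤ R) : sLam R 1 = 1 := by
  have h := sS_pos R hR
  simp only [sLam, one_dvd, if_true, Nat.div_one, Nat.cast_one, one_mul, sY]
  rw [← div_self h.ne']
  conv_rhs => enter [1]; rw [sS]
  rw [sum_div]
  refine sum_congr rfl fun k _ => by ring

lemma abs_mu_le (k : ℕ) : |((μ k : ℤ) : ℝ)| ≤ 1 := by
  exact_mod_cast abs_moebius_le_one (n := k)

lemma abs_sLam_le (R d : ℕ) (hR : 1 ≤ R) : |sLam R d| ≤ d := by
  have h := sS_pos R hR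
  rw [sLam, abs_mul, Nat.abs_cast]
  refine mul_le_of_le_one_right (by positivity) ?_
  refine (abs_sum_le_sum_abs _ _).trans ?_
  rw [← div_self h.ne']
  conv_rhs => enter [1]; rw [sS]
  rw [sum_div]
  refine sum_le_sum fun k _ => ?_
  split_ifs
  · rw [abs_mul]
    refine (mul_le_of_le_one_left (abs_nonneg _) (abs_mu_le _)).trans ?_
    rw [sY, abs_div, abs_div, Nat.abs_cast, abs_of_pos h]
    gcongr
    rcases moebius_eq_or k with h | h | h <;> simp [h]
  · simp; positivity

lemma mu_inner (k j : ℕ) (hk : 0 < k) (hj : 0 < j) (R : ℕ) (hjR : j ≤ R) :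
    ∑ d ∈ Icc 1 R, (if k ∣ d ∧ d ∣ j then ((μ (j / d) : ℤ) : ℝ) else 0)
      = if j = k then 1 else 0 := by
  by_cases hkj : k ∣ j
  · obtain ⟨t, rfl⟩ := hkj
    have ht : 0 < t := Nat.pos_of_mul_pos_left hj
    have h1 : ∑ d ∈ Icc 1 R, (if k ∣ d ∧ d ∣ k * t then ((μ (k * t / d) : ℤ) : ℝ) else 0)
        = ∑ e ∈ t.divisors, ((μ (t / e) : ℤ) : ℝ) := by
      rw [← sum_filter]
      symm
      refine sum_bij (fun e _ => k * e) ?_ ?_ ?_ ?_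
      · intro e he
        have he' := Nat.dvd_of_mem_divisors he
        have hd : k * e ∣ k * t := Nat.mul_dvd_mul_left k he'
        simp only [mem_filter, mem_Icc]
        exact ⟨⟨Nat.mul_pos hk (Nat.pos_of_mem_divisors he), (Nat.le_of_dvd hj hd).trans hjR⟩,
          Dvd.intro _ rfl, hd⟩
      · intro a _ b _ hab
        exact Nat.eq_of_mul_eq_mul_left hk hab
      · intro d hd
        simp only [mem_filter, mem_Icc] at hd
        obtain ⟨_, ⟨e, rfl⟩, h3⟩ := hd
        exact ⟨e, by simp [ht.ne', Nat.dvd_of_mul_dvd_mul_left hk h3], rfl⟩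
      · intro e _
        rw [Nat.mul_div_mul_left _ _ hk]
    rw [h1, Nat.sum_div_divisors t (fun e => ((μ e : ℤ) : ℝ))]
    have h2 : ∑ e ∈ t.divisors, ((μ e : ℤ) : ℝ) = if t = 1 then 1 else 0 := by
      have := congrArg (fun f => f t) coe_zeta_mul_moebius
      simp only [coe_zeta_mul_apply, one_apply] at this
      exact_mod_cast this
    rw [h2]
    have h3 : (k * t = k) ↔ t = 1 := by
      constructor
      · intro h; exact Nat.eq_of_mul_eq_mul_left hk (by omega)
      · rintro rfl; simp
    simp [h3]
  · rw [sum_eq_zero, if_neg (by rintro rfl; exact hkj dvd_rfl)]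
    intro d _
    rw [if_neg]
    rintro ⟨h1, h2⟩
    exact hkj (h1.trans h2)

lemma sY_inv (R k : ℕ) (hk : k ∈ Icc 1 R) :
    ∑ d ∈ Icc 1 R, (if k ∣ d then sLam R d / d else 0) = sY R k := by
  have hk' := mem_Icc.mp hk
  have h1 : ∀ d ∈ Icc 1 R, (if k ∣ d then sLam R d / d else 0) =
      ∑ j ∈ Icc 1 R, (if k ∣ d ∧ d ∣ j then ((μ (j / d) : ℤ) : ℝ) else 0) * sY R j := by
    intro d hd
    have hd0 : (d:ℝ) ≠ 0 := by have := (mem_Icc.mp hd).1; positivity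
    by_cases h : k ∣ d
    · simp only [h, if_true, true_and, sLam]
      rw [mul_div_cancel_left₀ _ hd0]
      refine sum_congr rfl fun j _ => by split_ifs <;> simp
    · simp [h]
  rw [sum_congr rfl h1, sum_comm]
  simp_rw [← sum_mul]
  rw [sum_eq_single k]
  · rw [mu_inner k k hk'.1 hk'.1 R hk'.2]; simp
  · intro j hj hne
    have hj' := mem_Icc.mp hj
    rw [mu_inner k j hk'.1 hj'.1 R hj'.2]; simp [hne]
  · intro h; exact absurd hk h

lemma inv_lcm (R d e : ℕ) (hd : d ∈ Icc 1 R) (he : e ∈ Icc 1 R) :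
    (1:ℝ) / (Nat.lcm d e : ℕ) = ∑ k ∈ Icc 1 R,
      (Nat.totient k : ℝ) * (if k ∣ d then 1 / (d:ℝ) else 0) * (if k ∣ e then 1 / (e:ℝ) else 0) := by
  have hd' := mem_Icc.mp hd
  have he' := mem_Icc.mp he
  have hd0 : (d:ℝ) ≠ 0 := by have := hd'.1; positivity
  have he0 : (e:ℝ) ≠ 0 := by have := he'.1; positivity
  have hg : ((Nat.gcd d e : ℕ) : ℝ) = ∑ k ∈ Icc 1 R, if k ∣ d ∧ k ∣ e then (Nat.totient k : ℝ) else 0 := by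
    conv_lhs => rw [← Nat.sum_totient (Nat.gcd d e)]
    push_cast
    rw [← sum_filter]
    refine sum_congr ?_ fun _ _ => rfl
    ext k
    simp only [Nat.mem_divisors, mem_filter, mem_Icc, Nat.dvd_gcd_iff]
    constructor
    · rintro ⟨⟨h1, h2⟩, _⟩
      exact ⟨⟨Nat.pos_of_dvd_of_pos h1 hd'.1, (Nat.le_of_dvd hd'.1 h1).trans hd'.2⟩, h1, h2⟩
    · rintro ⟨_, h1, h2⟩
      exact ⟨⟨h1, h2⟩, (Nat.gcd_pos_of_pos_left _ hd'.1).ne'⟩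
  have hl : ((Nat.gcd d e : ℕ) : ℝ) * (Nat.lcm d e : ℕ) = d * e := by
    exact_mod_cast Nat.gcd_mul_lcm d e
  have hl0 : ((Nat.lcm d e : ℕ) : ℝ) ≠ 0 := by
    intro h; rw [h] at hl; simp at hl; omega
  have : (1:ℝ) / (Nat.lcm d e : ℕ) = (Nat.gcd d e : ℕ) * (1 / d) * (1 / e) := by
    field_simp; linarith
  rw [this, hg, sum_mul, sum_mul]
  refine sum_congr rfl fun k _ => ?_
  by_cases h1 : k ∣ d <;> by_cases h2 : k ∣ e <;> simp [h1, h2]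

lemma quad (R : ℕ) (hR : 1 ≤ R) :
    ∑ d ∈ Icc 1 R, ∑ e ∈ Icc 1 R, sLam R d * sLam R e * (1 / (Nat.lcm d e : ℕ)) = 1 / sS R := by
  have h := sS_pos R hR
  have h1 : ∀ k ∈ Icc 1 R, (Nat.totient k : ℝ) * (sY R k) ^ 2 =
      ∑ d ∈ Icc 1 R, ∑ e ∈ Icc 1 R, sLam R d * sLam R e * ((Nat.totient k : ℝ) * (if k ∣ d then 1 / (d:ℝ) else 0) * (if k ∣ e then 1 / (e:ℝ) else 0)) := by
    intro k hk
    rw [← sY_inv R k hk, sq, sum_mul_sum, mul_sum]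
    refine sum_congr rfl fun d _ => ?_
    rw [mul_sum]
    refine sum_congr rfl fun e _ => ?_
    by_cases h1 : k ∣ d <;> by_cases h2 : k ∣ e <;> simp [h1, h2]
    ring
  have h2 : ∑ d ∈ Icc 1 R, ∑ e ∈ Icc 1 R, sLam R d * sLam R e * (1 / (Nat.lcm d e : ℕ)) =
      ∑ k ∈ Icc 1 R, (Nat.totient k : ℝ) * (sY R k) ^ 2 := by
    rw [sum_congr rfl h1, sum_comm (s := Icc 1 R) (f := fun k d => ∑ e ∈ Icc 1 R, sLam R d * sLam R e * ((Nat.totient k : ℝ) * (if k ∣ d then 1 / (d:ℝ) else 0) * (if k ∣ e then 1 / (e:ℝ) else 0)))]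
    refine sum_congr rfl fun d hd => ?_
    rw [sum_comm (s := Icc 1 R) (f := fun k e => sLam R d * sLam R e * ((Nat.totient k : ℝ) * (if k ∣ d then 1 / (d:ℝ) else 0) * (if k ∣ e then 1 / (e:ℝ) else 0)))]
    refine sum_congr rfl fun e he => ?_
    rw [inv_lcm R d e hd he, mul_sum]
  rw [h2]
  have h3 : ∀ k ∈ Icc 1 R, (Nat.totient k : ℝ) * (sY R k) ^ 2 =
      ((μ k : ℤ) : ℝ) ^ 2 / (Nat.totient k : ℝ) / (sS R) ^ 2 := by
    intro k hk
    have : 0 < (Nat.totient k : ℝ) := by exact_mod_cast Nat.totient_pos.mpr (mem_Icc.mp hk).1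
    rw [sY]; field_simp
  rw [sum_congr rfl h3, ← sum_div]
  change sS R / sS R ^ 2 = _
  field_simp

lemma sS_ge (R : ℕ) : Real.log (R + 1) ≤ 1.64494 * sS R := by
  choose a b hab using Nat.sq_mul_squarefree
  have h1 : Real.log (R + 1) ≤ ∑ n ∈ Icc 1 R, (n:ℝ)⁻¹ := by
    have := log_add_one_le_harmonic R
    rw [harmonic_eq_sum_Icc] at this
    push_cast at this
    exact this
  refine h1.trans ?_
  let g : ℕ × ℕ → ℝ := fun q => ((μ q.1 : ℤ) : ℝ) ^ 2 / (q.1 : ℝ) * (1 / (q.2 : ℝ) ^ 2)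
  have h2 : ∑ n ∈ Icc 1 R, (n:ℝ)⁻¹ = ∑ q ∈ (Icc 1 R).image (fun n => (a n, b n)), g q := by
    rw [sum_image]
    · refine sum_congr rfl fun n hn => ?_
      obtain ⟨e1, e2⟩ := hab n
      have hm : ((μ (a n) : ℤ) : ℝ) ^ 2 = 1 := by
        exact_mod_cast moebius_sq_eq_one_of_squarefree e2
      simp only [g]
      rw [hm]
      conv_lhs => rw [← e1]
      push_cast
      rw [mul_inv]; ring
    · intro n _ n' _ h
      simp only [Prod.mk.injEq] at h
      rw [← (hab n).1, ← (hab n').1, h.1, h.2]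
  have h3 : (Icc 1 R).image (fun n => (a n, b n)) ⊆ Icc 1 R ×ˢ Icc 1 R := by
    intro q hq
    obtain ⟨n, hn, rfl⟩ := mem_image.mp hq
    have hn' := mem_Icc.mp hn
    have e1 := (hab n).1
    have hb0 : 0 < b n := by
      rcases Nat.eq_zero_or_pos (b n) with h | h
      · rw [h] at e1; simp at e1; omega
      · exact h
    have ha0 : 0 < a n := by
      rcases Nat.eq_zero_or_pos (a n) with h | h
      · rw [h] at e1; simp at e1; omega
      · exact h
    simp only [mem_product, mem_Icc]
    refine ⟨⟨ha0, ?_⟩, hb0, ?_⟩ <;> nlinarith [Nat.mul_le_mul hb0 hb0]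
  rw [h2]
  refine (sum_le_sum_of_subset_of_nonneg h3 (fun q _ _ => by simp only [g]; positivity)).trans ?_
  rw [sum_product]
  simp only [g]
  rw [← sum_mul_sum, mul_comm]
  have h4 : ∑ b ∈ Icc 1 R, 1 / (b:ℝ) ^ 2 ≤ 1.64494 := by
    refine (hasSum_zeta_two.summable.sum_le_tsum _ (fun _ _ => by positivity)).trans ?_
    rw [hasSum_zeta_two.tsum_eq]
    have := Real.pi_lt_d6
    nlinarith [Real.pi_pos]
  have h5 : ∑ a ∈ Icc 1 R, ((μ a : ℤ) : ℝ) ^ 2 / (a : ℝ) ≤ sS R := by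
    refine sum_le_sum fun k hk => ?_
    have h0 : 0 < (Nat.totient k : ℝ) := by exact_mod_cast Nat.totient_pos.mpr (mem_Icc.mp hk).1
    have : (Nat.totient k : ℝ) ≤ k := by exact_mod_cast Nat.totient_le k
    gcongr
  have h6 : 0 ≤ ∑ a ∈ Icc 1 R, ((μ a : ℤ) : ℝ) ^ 2 / (a : ℝ) := sum_nonneg fun _ _ => by positivity
  exact mul_le_mul h4 h5 h6 (by norm_num)

/-- multiples of `r` in `[u, v)` -/
lemma card_mult_s17 (u v r : ℕ) (huv : u ≤ v) (hr : 0 < r) :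
    |(∑ n ∈ Ico u v, if r ∣ n then (1:ℝ) else 0) - (v - u) * (1 / (r : ℝ))| ≤ 1 := by
  have hr' : (0:ℤ) < r := by exact_mod_cast hr
  have h := Int.Ico_filter_dvd_card (u : ℤ) (v : ℤ) hr'
  have h1 : (∑ n ∈ Ico u v, if r ∣ n then (1:ℝ) else 0) =
      (((Ico (u:ℤ) v).filter (fun z => (r:ℤ) ∣ z)).card : ℝ) := by
    rw [← sum_filter, sum_const, nsmul_eq_mul, mul_one]
    congr 1
    refine card_bij (fun n _ => (n:ℤ)) ?_ ?_ ?_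
    · intro n hn
      simp only [mem_filter, mem_Ico] at hn ⊢
      exact ⟨⟨by omega, by omega⟩, by exact_mod_cast hn.2⟩
    · intro a _ b _ hab; exact_mod_cast hab
    · intro z hz
      simp only [mem_filter, mem_Ico] at hz
      refine ⟨z.toNat, ?_, by omega⟩
      simp only [mem_filter, mem_Ico]
      refine ⟨⟨by omega, by omega⟩, ?_⟩
      have : (z.toNat : ℤ) = z := by omega
      rw [← Int.natCast_dvd_natCast, this]; exact hz.2
  have h2 : (((Ico (u:ℤ) v).filter (fun z => (r:ℤ) ∣ z)).card : ℤ) =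
      ⌈(v:ℚ) / r⌉ - ⌈(u:ℚ) / r⌉ := by
    have h' : ⌈(u:ℚ) / r⌉ ≤ ⌈(v:ℚ) / r⌉ := by
      apply Int.ceil_mono; gcongr
    push_cast at h
    rw [h, max_eq_left (by linarith)]
  have h3 : (((Ico (u:ℤ) v).filter (fun z => (r:ℤ) ∣ z)).card : ℚ) =
      ⌈(v:ℚ) / r⌉ - ⌈(u:ℚ) / r⌉ := by exact_mod_cast congrArg (Int.cast : ℤ → ℚ) h2
  have h4 : |(((Ico (u:ℤ) v).filter (fun z => (r:ℤ) ∣ z)).card : ℚ) - (v - u) * (1 / (r : ℚ))| ≤ 1 := by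
    rw [h3, abs_le]
    have e1 := Int.le_ceil ((v:ℚ) / r)
    have e2 := Int.ceil_lt_add_one ((v:ℚ) / r)
    have e3 := Int.le_ceil ((u:ℚ) / r)
    have e4 := Int.ceil_lt_add_one ((u:ℚ) / r)
    have e5 : ((v:ℚ) - u) * (1 / (r : ℚ)) = v / r - u / r := by ring
    rw [e5]
    constructor <;> linarith
  rw [h1]
  have h5 := (Rat.cast_le (K := ℝ)).mpr h4
  push_cast at h5
  exact h5

lemma sum_sq_bound (R u v : ℕ) (hR : 1 ≤ R) (huv : u ≤ v) :
    ∑ n ∈ Ico u v, (∑ d ∈ Icc 1 R, if d ∣ n then sLam R d else 0) ^ 2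
      ≤ (v - u) / sS R + (R:ℝ) ^ 4 := by
  have h1 : ∑ n ∈ Ico u v, (∑ d ∈ Icc 1 R, if d ∣ n then sLam R d else 0) ^ 2 =
      ∑ d ∈ Icc 1 R, ∑ e ∈ Icc 1 R, sLam R d * sLam R e *
        (∑ n ∈ Ico u v, if Nat.lcm d e ∣ n then (1:ℝ) else 0) := by
    have : ∀ n ∈ Ico u v, (∑ d ∈ Icc 1 R, if d ∣ n then sLam R d else 0) ^ 2 =
        ∑ d ∈ Icc 1 R, ∑ e ∈ Icc 1 R, sLam R d * sLam R e *
          (if Nat.lcm d e ∣ n then (1:ℝ) else 0) := by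
      intro n _
      rw [sq, sum_mul_sum]
      refine sum_congr rfl fun d _ => sum_congr rfl fun e _ => ?_
      by_cases h1 : d ∣ n <;> by_cases h2 : e ∣ n <;> simp [h1, h2, Nat.lcm_dvd_iff]
    rw [sum_congr rfl this, sum_comm]
    refine sum_congr rfl fun d _ => ?_
    rw [sum_comm]
    refine sum_congr rfl fun e _ => ?_
    rw [mul_sum]
  have h2 : ∀ d ∈ Icc 1 R, ∀ e ∈ Icc 1 R, sLam R d * sLam R e *
        (∑ n ∈ Ico u v, if Nat.lcm d e ∣ n then (1:ℝ) else 0) ≤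
        (v - u) * (sLam R d * sLam R e * (1 / (Nat.lcm d e : ℕ))) + (R:ℝ) ^ 2 := by
    intro d hd e he
    have hd' := mem_Icc.mp hd
    have he' := mem_Icc.mp he
    have hc := card_mult_s17 u v (Nat.lcm d e) huv (Nat.lcm_pos hd'.1 he'.1)
    set A := ∑ n ∈ Ico u v, if Nat.lcm d e ∣ n then (1:ℝ) else 0
    set B := ((v:ℝ) - u) * (1 / (Nat.lcm d e : ℕ)) with hB
    have a1 : |sLam R d| ≤ R := (abs_sLam_le R d hR).trans (by exact_mod_cast hd'.2)
    have a2 : |sLam R e| ≤ R := (abs_sLam_le R e hR).trans (by exact_mod_cast he'.2)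
    have a3 : sLam R d * sLam R e * (A - B) ≤ (R:ℝ) ^ 2 := by
      refine (le_abs_self _).trans ?_
      rw [abs_mul, abs_mul]
      calc _ ≤ (R:ℝ) * R * 1 := by gcongr
        _ = _ := by ring
    have a4 : ((v:ℝ) - u) * (sLam R d * sLam R e * (1 / (Nat.lcm d e : ℕ))) = sLam R d * sLam R e * B := by
      rw [hB]; ring
    rw [a4]; nlinarith
  rw [h1]
  refine (sum_le_sum fun d hd => sum_le_sum fun e he => h2 d hd e he).trans ?_
  simp only [sum_add_distrib, ← mul_sum]
  rw [quad R hR]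
  simp only [sum_const, Nat.card_Icc, Nat.add_sub_cancel, nsmul_eq_mul]
  apply le_of_eq; ring

lemma primepow_count (R u v : ℕ) (hR : 1 ≤ R) (huv : u ≤ v) (hv : v ≤ 2 * u) :
    (((Ico u v).filter IsPrimePow).card : ℝ) ≤ (v - u) / sS R + 2 * (R:ℝ) ^ 4 := by
  classical
  set P := (Ico u v).filter IsPrimePow with hP
  have hsplit := card_filter_add_card_filter_not (s := P) (fun n => n.minFac ≤ R)
  have hA : (P.filter (fun n => n.minFac ≤ R)).card ≤ R := by
    have : (P.filter (fun n => n.minFac ≤ R)).card ≤ (Icc 1 R).card := by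
      refine card_le_card_of_injOn Nat.minFac ?_ ?_
      · intro n hn
        have hn := mem_filter.mp (mem_coe.mp hn)
        simp only [coe_Icc, Set.mem_Icc]
        exact ⟨Nat.minFac_pos n, hn.2⟩
      · intro n hn n' hn' h
        simp only [coe_filter, Set.mem_ofPred_eq, hP, mem_filter, mem_Ico] at hn hn'
        obtain ⟨⟨⟨a1, a2⟩, a3⟩, -⟩ := hn
        obtain ⟨⟨⟨b1, b2⟩, b3⟩, -⟩ := hn'
        have key : ∀ s t : ℕ, ∀ p : ℕ, 2 ≤ p → u ≤ p ^ s → p ^ t < v → t ≤ s := by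
          intro s t p hp h1 h2
          by_contra hlt
          push Not at hlt
          have : p ^ (s + 1) ≤ p ^ t := Nat.pow_le_pow_right (by omega) hlt
          have h3 : 2 * p ^ s ≤ p ^ (s + 1) := by rw [pow_succ]; nlinarith [Nat.zero_le (p ^ s)]
          omega
        obtain ⟨p, s, hp, hs, rfl⟩ := a3
        obtain ⟨q, t, hq, ht, rfl⟩ := b3
        rw [(Nat.prime_iff.mpr hp).pow_minFac hs.ne', (Nat.prime_iff.mpr hq).pow_minFac ht.ne'] at h
        subst h
        have hp2 := (Nat.prime_iff.mpr hp).two_le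
        have e1 := key s t p hp2 a1 b2
        have e2 := key t s p hp2 b1 a2
        rw [le_antisymm e1 e2]
    simpa using this
  have hB : ((P.filter (fun n => ¬ n.minFac ≤ R)).card : ℝ) ≤ (v - u) / sS R + (R:ℝ) ^ 4 := by
    refine le_trans ?_ (sum_sq_bound R u v hR huv)
    have hsub : P.filter (fun n => ¬ n.minFac ≤ R) ⊆ Ico u v :=
      (filter_subset _ _).trans (filter_subset _ _)
    refine le_trans ?_ (sum_le_sum_of_subset_of_nonneg hsub (fun n _ _ => sq_nonneg _))
    rw [card_eq_sum_ones]
    push_cast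
    refine sum_le_sum fun n hn => ?_
    simp only [hP, mem_filter, not_le] at hn
    have : ∑ d ∈ Icc 1 R, (if d ∣ n then sLam R d else 0) = 1 := by
      rw [sum_eq_single 1]
      · simp [sLam_one R hR]
      · intro d hd hne
        have hd' := mem_Icc.mp hd
        rw [if_neg]
        intro hdn
        have := Nat.minFac_le_of_dvd (by omega) hdn
        omega
      · intro h; exact absurd (by simp [hR]) h
    rw [this]; norm_num
  have hR1 : (1:ℝ) ≤ R := by exact_mod_cast hR
  have hRR : (R:ℝ) ≤ (R:ℝ) ^ 4 := le_self_pow₀ hR1 (by norm_num)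
  have hA' : ((P.filter (fun n => n.minFac ≤ R)).card : ℝ) ≤ R := by exact_mod_cast hA
  have : (P.card : ℝ) = (P.filter (fun n => n.minFac ≤ R)).card + (P.filter (fun n => ¬ n.minFac ≤ R)).card := by
    exact_mod_cast hsplit.symm
  linarith

open Classical in
lemma block_le (A : ℕ → Prop) (k : ℕ) :
    ∑ t ∈ Ico (2 ^ k) (2 ^ (k + 1)), (if A t then 1 / ((t:ℝ) + 1 / 2) else 0) ≤
      (((Ico (2 ^ k) (2 ^ (k + 1))).filter A).card : ℝ) / 2 ^ k := by
  have e : (((Ico (2 ^ k) (2 ^ (k + 1))).filter A).card : ℝ) / 2 ^ k =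
      ((Ico (2 ^ k) (2 ^ (k + 1))).filter A).card • (1 / (2:ℝ) ^ k) := by
    rw [nsmul_eq_mul]; ring
  rw [← sum_filter, e]
  refine sum_le_card_nsmul _ _ _ fun t ht => ?_
  have h : 2 ^ k ≤ t := (mem_Ico.mp (mem_filter.mp ht).1).1
  have h' : (2:ℝ) ^ k ≤ t := by exact_mod_cast h
  have : (0:ℝ) < 2 ^ k := by positivity
  apply one_div_le_one_div_of_le this
  linarith

open Classical in
lemma block_le_one (A : ℕ → Prop) (k : ℕ) :
    ∑ t ∈ Ico (2 ^ k) (2 ^ (k + 1)), (if A t then 1 / ((t:ℝ) + 1 / 2) else 0) ≤ 1 := by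
  refine (block_le A k).trans ?_
  have h1 : ((Ico (2 ^ k) (2 ^ (k + 1))).filter A).card ≤ 2 ^ k := by
    refine (card_filter_le _ _).trans ?_
    rw [Nat.card_Ico, pow_succ]; omega
  have h2 : (((Ico (2 ^ k) (2 ^ (k + 1))).filter A).card : ℝ) ≤ 2 ^ k := by exact_mod_cast h1
  rw [div_le_one (by positivity)]
  exact h2

open Classical in
lemma block_le_sieve (A : ℕ → Prop)
    (hA : ∀ k R : ℕ, 1 ≤ R → (((Ico (2 ^ k) (2 ^ (k + 1))).filter A).card : ℝ) ≤
      2 ^ k / sS R + 2 * (R:ℝ) ^ 4) (i k : ℕ) (hi : 1 ≤ i) (hk : 5 * i ≤ k) :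
    ∑ t ∈ Ico (2 ^ k) (2 ^ (k + 1)), (if A t then 1 / ((t:ℝ) + 1 / 2) else 0) ≤
      2.374 / i + 2 / 2 ^ i := by
  refine (block_le A k).trans ?_
  have h1 := hA k (2 ^ i) Nat.one_le_two_pow
  have hS := sS_pos (2 ^ i) Nat.one_le_two_pow
  have hg := sS_ge (2 ^ i)
  have hl : i * Real.log 2 ≤ Real.log (((2 ^ i : ℕ) : ℝ) + 1) := by
    rw [← Real.log_pow]
    apply Real.log_le_log (by positivity)
    push_cast; linarith
  have hi' : (1:ℝ) ≤ i := by exact_mod_cast hi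
  have hl2 := Real.log_two_gt_d9
  have hS' : 0.6931 * i ≤ 1.64494 * sS (2 ^ i) := by nlinarith
  have h2 : 1 / sS (2 ^ i) ≤ 2.374 / i := by
    rw [div_le_div_iff₀ hS (by positivity)]
    nlinarith
  have hk2 : (0:ℝ) < 2 ^ k := by positivity
  have h3 : (2:ℝ) ^ k ≥ 2 ^ i * (2 ^ i) ^ 4 := by
    have : (2:ℝ) ^ i * (2 ^ i) ^ 4 = 2 ^ (5 * i) := by rw [← pow_mul, ← pow_add]; congr 1; ring
    rw [this]
    exact pow_le_pow_right₀ (by norm_num) hk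
  rw [div_le_iff₀ hk2]
  push_cast at h1
  refine h1.trans ?_
  have h4 : (2:ℝ) ^ k / sS (2 ^ i) ≤ 2.374 / i * 2 ^ k := by
    rw [div_eq_mul_one_div, mul_comm]; gcongr
  have h5 : 2 * ((2:ℝ) ^ i) ^ 4 ≤ 2 / 2 ^ i * 2 ^ k := by
    rw [div_mul_eq_mul_div, le_div_iff₀ (by positivity)]
    nlinarith
  linarith

open Classical in
lemma dyadic (A : ℕ → Prop)
    (hA : ∀ k R : ℕ, 1 ≤ R → (((Ico (2 ^ k) (2 ^ (k + 1))).filter A).card : ℝ) ≤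
      2 ^ k / sS R + 2 * (R:ℝ) ^ 4) (j : ℕ) :
    ∑ t ∈ range (2 ^ (5 * (j + 1))), (if A t then 1 / ((t:ℝ) + 1 / 2) else 0) ≤
      17 - 10 / 2 ^ j + 11.87 * ∑ i ∈ Icc 1 j, (i:ℝ)⁻¹ := by
  have step : ∀ k, ∑ t ∈ range (2 ^ (k + 1)), (if A t then 1 / ((t:ℝ) + 1 / 2) else 0) =
      ∑ t ∈ range (2 ^ k), (if A t then 1 / ((t:ℝ) + 1 / 2) else 0) +
      ∑ t ∈ Ico (2 ^ k) (2 ^ (k + 1)), (if A t then 1 / ((t:ℝ) + 1 / 2) else 0) := by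
    intro k
    rw [sum_range_add_sum_Ico _ (Nat.pow_le_pow_right (by norm_num) (by omega))]
  induction j with
  | zero =>
    have h0 : ∑ t ∈ range (2 ^ 0), (if A t then 1 / ((t:ℝ) + 1 / 2) else 0) ≤ 2 := by
      simp only [pow_zero, range_one, sum_singleton]
      split_ifs <;> norm_num
    have b0 := block_le_one A 0
    have b1 := block_le_one A 1
    have b2 := block_le_one A 2
    have b3 := block_le_one A 3
    have b4 := block_le_one A 4
    have s0 := step 0
    have s1 := step 1
    have s2 := step 2
    have s3 := step 3
    have s4 := step 4
    simp only [zero_add, Nat.reduceAdd, mul_one] at *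
    simp only [show Icc 1 0 = (∅ : Finset ℕ) from rfl, sum_empty]
    norm_num only at *
    linarith
  | succ j ih =>
    have b := block_le_sieve A hA (j + 1)
    have b0 := b (5 * (j + 1)) (by omega) (by omega)
    have b1 := b (5 * (j + 1) + 1) (by omega) (by omega)
    have b2 := b (5 * (j + 1) + 2) (by omega) (by omega)
    have b3 := b (5 * (j + 1) + 3) (by omega) (by omega)
    have b4 := b (5 * (j + 1) + 4) (by omega) (by omega)
    have s0 := step (5 * (j + 1))
    have s1 := step (5 * (j + 1) + 1)
    have s2 := step (5 * (j + 1) + 2)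
    have s3 := step (5 * (j + 1) + 3)
    have s4 := step (5 * (j + 1) + 4)
    rw [sum_Icc_succ_top (by omega : 1 ≤ j + 1)]
    have e : 5 * (j + 1 + 1) = 5 * (j + 1) + 4 + 1 := by ring
    rw [e, s4, s3, s2, s1, s0]
    have e2 : (10:ℝ) / 2 ^ j = 10 / 2 ^ (j + 1) + 10 / 2 ^ (j + 1) := by rw [pow_succ]; field_simp; norm_num
    have e3 : (2.374:ℝ) / ((j + 1 : ℕ) : ℝ) = 2.374 * ((j + 1 : ℕ) : ℝ)⁻¹ := by ring
    have e4 : (10:ℝ) / 2 ^ (j + 1) = 5 * (2 / 2 ^ (j + 1)) := by ring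
    rw [e3] at b0 b1 b2 b3 b4
    rw [e2, e4] at ih
    rw [e4]
    linarith

lemma harm_le (m j : ℕ) (x : ℝ) (hx : (m:ℝ) ≤ x) (hj : 32 ^ j ≤ m) (hL : 1 ≤ Real.log x) :
    ∑ i ∈ Icc 1 j, (i:ℝ)⁻¹ ≤ Real.log (Real.log x) := by
  rcases Nat.eq_zero_or_pos j with rfl | h
  · simp; exact Real.log_nonneg hL
  · have h1 := harmonic_le_one_add_log j
    rw [harmonic_eq_sum_Icc] at h1
    push_cast at h1
    refine h1.trans ?_
    have h2 : (32:ℝ) ^ j ≤ x := le_trans (by exact_mod_cast hj) hx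
    have h3 : j * Real.log 32 ≤ Real.log x := by
      rw [← Real.log_pow]; exact Real.log_le_log (by positivity) h2
    have h4 : Real.log 32 = 5 * Real.log 2 := by
      rw [show (32:ℝ) = 2 ^ 5 by norm_num, Real.log_pow]; norm_num
    have h5 := Real.log_two_gt_d9
    have hj' : (1:ℝ) ≤ j := by exact_mod_cast h
    have h6 : Real.exp 1 * j ≤ Real.log x := by
      have := Real.exp_one_lt_d9
      nlinarith
    have h7 := Real.log_le_log (by positivity) h6
    rw [Real.log_mul (Real.exp_ne_zero _) (by positivity), Real.log_exp] at h7
    exact h7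

open Classical in
lemma near_gen (A : ℕ → Prop)
    (hA : ∀ k R : ℕ, 1 ≤ R → (((Ico (2 ^ k) (2 ^ (k + 1))).filter A).card : ℝ) ≤
      2 ^ k / sS R + 2 * (R:ℝ) ^ 4) (m : ℕ) (x : ℝ) (hm : 0 < m) (hx : (m:ℝ) ≤ x)
      (hL : 1 ≤ Real.log x) :
    ∑ t ∈ range m, (if A t then 1 / ((t:ℝ) + 1 / 2) else 0) ≤
      17 + 11.87 * Real.log (Real.log x) := by
  have h1 : 32 ^ (Nat.log 32 m) ≤ m := Nat.pow_log_le_self 32 hm.ne'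
  have h2 : m < 32 ^ (Nat.log 32 m + 1) := Nat.lt_pow_succ_log_self (by norm_num) m
  have h3 := dyadic A hA (Nat.log 32 m)
  have h4 := harm_le m _ x hx h1 hL
  have h5 : range m ⊆ range (2 ^ (5 * (Nat.log 32 m + 1))) := by
    apply range_subset_range.mpr
    rw [pow_mul]; norm_num only
    exact h2.le
  have h6 := sum_le_sum_of_subset_of_nonneg (f := fun t : ℕ => (if A t then 1 / ((t:ℝ) + 1 / 2) else 0)) h5
    (fun t _ _ => by positivity)
  have h7 : (0:ℝ) ≤ 10 / 2 ^ (Nat.log 32 m) := by positivity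
  linarith

lemma hA_right (m k R : ℕ) (hR : 1 ≤ R) :
    (((Ico (2 ^ k) (2 ^ (k + 1))).filter (fun t => IsPrimePow (m + 1 + t))).card : ℝ) ≤
      2 ^ k / sS R + 2 * (R:ℝ) ^ 4 := by
  have h := primepow_count R (m + 1 + 2 ^ k) (m + 1 + 2 ^ (k + 1)) hR
    (by rw [pow_succ]; omega) (by rw [pow_succ]; omega)
  have h1 : ((Ico (2 ^ k) (2 ^ (k + 1))).filter (fun t => IsPrimePow (m + 1 + t))).card ≤
      ((Ico (m + 1 + 2 ^ k) (m + 1 + 2 ^ (k + 1))).filter IsPrimePow).card := by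
    refine card_le_card_of_injOn (fun t => m + 1 + t) ?_ ?_
    · intro t ht
      simp only [coe_filter, Set.mem_ofPred_eq, mem_Ico] at ht ⊢
      exact ⟨⟨by omega, by omega⟩, ht.2⟩
    · intro a _ b _ hab
      simp only at hab; omega
  have h2 : (((m + 1 + 2 ^ (k + 1) : ℕ) : ℝ) - ((m + 1 + 2 ^ k : ℕ) : ℝ)) = 2 ^ k := by
    push_cast; rw [pow_succ]; ring
  rw [h2] at h
  exact le_trans (by exact_mod_cast h1) h

lemma hA_left (m k R : ℕ) (hR : 1 ≤ R) :
    (((Ico (2 ^ k) (2 ^ (k + 1))).filter (fun t => IsPrimePow (m - t) ∧ 3 * t < m)).card : ℝ) ≤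
      2 ^ k / sS R + 2 * (R:ℝ) ^ 4 := by
  have hS := sS_pos R hR
  by_cases hk : 3 * 2 ^ k < m
  · set u := max (m + 1 - 2 ^ (k + 1)) (2 * m / 3 + 1) with hu
    have huv : u ≤ m + 1 - 2 ^ k := by
      rw [hu, pow_succ]; apply max_le <;> omega
    have hu2 : 2 * m / 3 + 1 ≤ u := le_max_right _ _
    have hu1 : m + 1 - 2 ^ (k + 1) ≤ u := le_max_left _ _
    have h := primepow_count R u (m + 1 - 2 ^ k) hR huv (by omega)
    have h1 : ((Ico (2 ^ k) (2 ^ (k + 1))).filter (fun t => IsPrimePow (m - t) ∧ 3 * t < m)).card ≤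
        ((Ico u (m + 1 - 2 ^ k)).filter IsPrimePow).card := by
      refine card_le_card_of_injOn (fun t => m - t) ?_ ?_
      · intro t ht
        simp only [coe_filter, Set.mem_ofPred_eq, mem_Ico] at ht ⊢
        refine ⟨⟨?_, by omega⟩, ht.2.1⟩
        rw [hu]; apply max_le <;> omega
      · intro a ha b hb hab
        simp only [coe_filter, Set.mem_ofPred_eq] at ha hb
        simp only at hab; omega
    have h2 : (((m + 1 - 2 ^ k : ℕ) : ℝ) - (u : ℝ)) ≤ 2 ^ k := by
      have : m + 1 - 2 ^ k ≤ u + 2 ^ k := by rw [pow_succ] at hu1; omega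
      have : ((m + 1 - 2 ^ k : ℕ) : ℝ) ≤ u + 2 ^ k := by exact_mod_cast this
      linarith
    refine le_trans (by exact_mod_cast h1) (h.trans ?_)
    gcongr
  · rw [filter_false_of_mem]
    · simp; positivity
    · intro t ht
      have := (mem_Ico.mp ht).1
      omega

lemma sum_le_supp (s t : Finset ℕ) (f : ℕ → ℝ) (h0 : ∀ n, 0 ≤ f n) (h : ∀ n, n ∉ t → f n = 0) :
    ∑ n ∈ s, f n ≤ ∑ n ∈ t, f n := by
  calc ∑ n ∈ s, f n ≤ ∑ n ∈ s ∪ t, f n :=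
        sum_le_sum_of_subset_of_nonneg subset_union_left (fun n _ _ => h0 n)
    _ = ∑ n ∈ t, f n := (sum_subset subset_union_right (fun n _ hn => h n hn)).symm

open Classical in
noncomputable def gR (m n : ℕ) : ℝ :=
  if IsPrimePow n ∧ m < n ∧ n ≤ 2 * m then 1 / ((n:ℝ) - (m + 1 / 2)) else 0

open Classical in
noncomputable def gL (m n : ℕ) : ℝ :=
  if IsPrimePow n ∧ n ≤ m ∧ 2 * m < 3 * n then 1 / (((m:ℝ) + 1 / 2) - n) else 0

lemma gR_nonneg (m n : ℕ) : 0 ≤ gR m n := by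
  rw [gR]; split_ifs with h
  · have : (m:ℝ) + 1 ≤ n := by exact_mod_cast h.2.1
    apply one_div_nonneg.mpr; linarith
  · exact le_rfl

lemma gL_nonneg (m n : ℕ) : 0 ≤ gL m n := by
  rw [gL]; split_ifs with h
  · have : (n:ℝ) ≤ m := by exact_mod_cast h.2.1
    apply one_div_nonneg.mpr; linarith
  · exact le_rfl

lemma gR_sum (m N : ℕ) (x : ℝ) (hm : 0 < m) (hx : (m:ℝ) ≤ x) (hL : 1 ≤ Real.log x) :
    ∑ n ∈ range N, gR m n ≤ 17 + 11.87 * Real.log (Real.log x) := by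
  classical
  refine (sum_le_supp _ (Ico (m + 1) (2 * m + 1)) _ (gR_nonneg m) ?_).trans ?_
  · intro n hn
    rw [gR, if_neg]
    rintro ⟨_, h1, h2⟩
    exact hn (mem_Ico.mpr ⟨by omega, by omega⟩)
  · rw [sum_Ico_eq_sum_range]
    have e : 2 * m + 1 - (m + 1) = m := by omega
    rw [e]
    refine le_trans (sum_le_sum fun t ht => ?_) (near_gen (fun t => IsPrimePow (m + 1 + t))
      (fun k R hR => by convert hA_right m k R hR) m x hm hx hL)
    rw [gR]
    by_cases hp : IsPrimePow (m + 1 + t)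
    · have := mem_range.mp ht
      rw [if_pos ⟨hp, by omega, by omega⟩, if_pos hp]
      apply le_of_eq; push_cast; congr 1; ring
    · rw [if_neg (fun h => hp h.1), if_neg hp]

lemma gL_sum (m N : ℕ) (x : ℝ) (hm : 0 < m) (hx : (m:ℝ) ≤ x) (hL : 1 ≤ Real.log x) :
    ∑ n ∈ range N, gL m n ≤ 17 + 11.87 * Real.log (Real.log x) := by
  classical
  refine (sum_le_supp _ (Icc 1 m) _ (gL_nonneg m) ?_).trans ?_
  · intro n hn
    rw [gL, if_neg]
    rintro ⟨_, h1, h2⟩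
    exact hn (mem_Icc.mpr ⟨by omega, by omega⟩)
  · have e : ∑ n ∈ Icc 1 m, gL m n = ∑ t ∈ range m, gL m (m - t) := by
      refine sum_bij' (fun n _ => m - n) (fun t _ => m - t) ?_ ?_ ?_ ?_ ?_
      · intro n hn; have := mem_Icc.mp hn; exact mem_range.mpr (by omega)
      · intro n hn; have := mem_range.mp hn; exact mem_Icc.mpr (by omega)
      · intro n hn; have := mem_Icc.mp hn; omega
      · intro n hn; have := mem_range.mp hn; omega
      · intro n hn; have := mem_Icc.mp hn; congr 1; omega
    rw [e]
    refine le_trans (sum_le_sum fun t ht => ?_) (near_gen (fun t => IsPrimePow (m - t) ∧ 3 * t < m)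
      (fun k R hR => by convert hA_left m k R hR) m x hm hx hL)
    have ht' := mem_range.mp ht
    rw [gL]
    by_cases hp : IsPrimePow (m - t) ∧ 3 * t < m
    · rw [if_pos ⟨hp.1, by omega, by omega⟩, if_pos hp]
      apply le_of_eq; rw [Nat.cast_sub ht'.le]; congr 1; ring
    · rw [if_neg (fun h => hp ⟨h.1, by omega⟩), if_neg hp]

lemma log_ge (x : ℝ) (hx : 3.5 ≤ x) : 1.25 ≤ Real.log x := by
  rw [Real.le_log_iff_exp_le (by linarith)]
  refine le_trans ?_ hx
  have h1 : Real.exp 1.25 ^ 4 = Real.exp 1 ^ 5 := by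
    rw [← Real.exp_nat_mul, ← Real.exp_nat_mul]; norm_num
  have h2 : Real.exp 1 ^ 5 ≤ (2.7183:ℝ) ^ 5 := by
    have := Real.exp_one_lt_d9
    gcongr; linarith
  by_contra h
  push Not at h
  have h3 : (3.5:ℝ) ^ 4 < Real.exp 1.25 ^ 4 := by gcongr
  rw [h1] at h3
  norm_num at h2 h3
  linarith

lemma log_three_halves : 0.4054 ≤ Real.log (3 / 2) := by
  rw [Real.log_div (by norm_num) (by norm_num)]
  have h1 := Real.log_three_gt_d9
  have h2 := Real.log_two_lt_d9
  linarith

/-- pointwise bound -/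
lemma term_le (m n : ℕ) (x T : ℝ) (hxm : x = m + 1 / 2) (hx : 3.5 ≤ x) (hT : 0 < T)
    (hn : 2 ≤ n) :
    (x / n) ^ (1 / Real.log x) * (Λ n / (n * Real.log n)) *
          min 1 (1 / (T * |Real.log (x / n)|)) ≤
    1 / T * (6.71 * (Λ n / ((n:ℝ) ^ (1 + 1 / Real.log x) * Real.log n)) + gR m n + 1.75 * gL m n) := by
  have hL := log_ge x hx
  set L := Real.log x with hLdef
  have hx0 : 0 < x := by linarith
  have hn0 : (0:ℝ) < n := by positivity
  have hln : 0 < Real.log n := Real.log_pos (by exact_mod_cast hn)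
  have hΛ0 : 0 ≤ Λ n := vonMangoldt_nonneg
  have hΛ1 : Λ n ≤ Real.log n := vonMangoldt_le_log
  have hR := gR_nonneg m n
  have hLn := gL_nonneg m n
  by_cases hpp : IsPrimePow n
  swap
  · have : Λ n = 0 := vonMangoldt_eq_zero_iff.mpr hpp
    rw [this]; simp; positivity
  set w := Λ n / Real.log n with hw
  have hw0 : 0 ≤ w := by positivity
  have hw1 : w ≤ 1 := (div_le_one hln).mpr hΛ1
  set P := (x / n) ^ (1 / L) with hP
  have hP0 : 0 < P := Real.rpow_pos_of_pos (by positivity) _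
  set a := |Real.log (x / n)| with ha
  have hPe : P = Real.exp 1 / (n:ℝ) ^ (1 / L) := by
    rw [hP, Real.div_rpow hx0.le hn0.le]
    congr 1
    rw [Real.rpow_def_of_pos hx0, ← hLdef, mul_one_div_cancel (by linarith)]
  have hfar : P * (Λ n / (n * Real.log n)) = Real.exp 1 * (Λ n / ((n:ℝ) ^ (1 + 1 / L) * Real.log n)) := by
    rw [hPe, Real.rpow_add hn0, Real.rpow_one]
    have : (0:ℝ) < (n:ℝ) ^ (1 / L) := Real.rpow_pos_of_pos hn0 _
    field_simp
  have hfar0 : 0 ≤ Λ n / ((n:ℝ) ^ (1 + 1 / L) * Real.log n) := by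
    have : (0:ℝ) < (n:ℝ) ^ (1 + 1 / L) := Real.rpow_pos_of_pos hn0 _
    positivity
  have hmain : ∀ B : ℝ, 0 < a → P * (Λ n / (n * Real.log n)) ≤ B * a →
      P * (Λ n / (n * Real.log n)) * min 1 (1 / (T * a)) ≤ 1 / T * B := by
    intro B ha0 hB
    have h1 : min 1 (1 / (T * a)) ≤ 1 / (T * a) := min_le_right _ _
    have h0 : 0 ≤ P * (Λ n / (n * Real.log n)) := by positivity
    calc _ ≤ (B * a) * (1 / (T * a)) := by
          apply mul_le_mul hB h1 (le_min zero_le_one (by positivity)) (h0.trans hB)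
      _ = 1 / T * B := by field_simp
  have hnear : P * (Λ n / (n * Real.log n)) = P * w / n := by rw [hw]; field_simp
  have hne : x ≠ n := by
    intro h
    rw [hxm] at h
    have h2 : ((2 * m + 1 : ℕ) : ℝ) = ((2 * n : ℕ) : ℝ) := by push_cast; linarith
    have := Nat.cast_injective h2
    omega
  have h15 := log_three_halves
  by_cases hc : Real.log (3 / 2) ≤ a
  · refine hmain _ (by linarith) ?_
    rw [hfar]
    have he := Real.exp_one_lt_d9
    have : Real.exp 1 * (Λ n / ((n:ℝ) ^ (1 + 1 / L) * Real.log n)) ≤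
        6.71 * (Λ n / ((n:ℝ) ^ (1 + 1 / L) * Real.log n)) * a := by
      have : Real.exp 1 ≤ 6.71 * a := by linarith
      nlinarith
    refine this.trans ?_
    have ha0 : 0 < a := by linarith
    gcongr
    linarith
  · push Not at hc
    rw [ha, abs_lt] at hc
    rcases lt_or_gt_of_ne hne with hlt | hgt
    · -- x < n
      have hlog : Real.log (x / n) < 0 := Real.log_neg (by positivity) ((div_lt_one hn0).mpr hlt)
      have haeq : a = -Real.log (x / n) := by rw [ha, abs_of_neg hlog]
      have hg1 : (n - x) / n ≤ a := by
        rw [haeq]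
        have := Real.log_le_sub_one_of_pos (show 0 < x / n by positivity)
        rw [sub_div, div_self hn0.ne']; linarith
      have hn32 : (n:ℝ) < 3 / 2 * x := by
        have h1 : Real.log (n / x) < Real.log (3 / 2) := by
          rw [← inv_div, Real.log_inv]; linarith
        have := (Real.log_lt_log_iff (by positivity) (by norm_num)).mp h1
        rwa [div_lt_iff₀ hx0] at this
      have hgR : gR m n = 1 / (n - x) := by
        rw [gR, if_pos, hxm]
        refine ⟨hpp, ?_, ?_⟩
        · have : (m:ℝ) < n := by linarith
          exact_mod_cast this
        · have hm3 : (3:ℝ) ≤ m := by linarith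
          have : (n:ℝ) ≤ ((2 * m : ℕ) : ℝ) := by push_cast; linarith
          exact_mod_cast this
      have hd : 0 < n - x := by linarith
      have ha0 : 0 < a := lt_of_lt_of_le (by positivity) hg1
      refine hmain _ ha0 ?_
      rw [hnear]
      have hP1 : P ≤ 1 := Real.rpow_le_one (by positivity) ((div_le_one hn0).mpr hlt.le) (by positivity)
      calc P * w / n ≤ 1 * 1 / n := by gcongr
        _ = gR m n * ((n - x) / n) := by rw [hgR]; field_simp
        _ ≤ gR m n * a := by gcongr
        _ ≤ _ := by
          gcongr
          nlinarith
    · have hgt : (n:ℝ) < x := hgt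
      have h1lt : 1 < x / n := (one_lt_div hn0).mpr hgt
      have hlog : 0 < Real.log (x / n) := Real.log_pos h1lt
      have haeq : a = Real.log (x / n) := by rw [ha, abs_of_pos hlog]
      have hq : x / n < 3 / 2 := (Real.log_lt_log_iff (by positivity) (by norm_num)).mp hc.2
      have hx32 : x < 3 / 2 * n := by rwa [div_lt_iff₀ hn0] at hq
      have hd : 0 < x - n := by linarith
      have hg1 : 2 * (x - n) / (x + n) ≤ a := by
        rw [haeq]
        have := Real.le_log_one_add_of_nonneg (x := x / n - 1) (by linarith)
        rw [show 1 + (x / n - 1) = x / n by ring] at this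
        refine le_trans (le_of_eq ?_) this
        have : x + n ≠ 0 := by positivity
        have e : x / n - 1 + 2 = (x + n) / n := by field_simp; ring
        rw [e]; field_simp
      have hgL : gL m n = 1 / (x - n) := by
        rw [gL, if_pos, hxm]
        refine ⟨hpp, ?_, ?_⟩
        · have : (n:ℝ) < ((m + 1 : ℕ) : ℝ) := by push_cast; linarith
          have : n < m + 1 := by exact_mod_cast this
          omega
        · have : ((2 * m : ℕ) : ℝ) < ((3 * n : ℕ) : ℝ) := by push_cast; linarith
          exact_mod_cast this
      refine hmain _ (by linarith) ?_
      rw [hnear]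
      have hL1 : 1 / L ≤ 0.8 := by rw [div_le_iff₀ (by linarith)]; linarith
      have hL0 : 0 ≤ 1 / L := by positivity
      have hP1 : P ≤ 1.4 := by
        have h1 : P ≤ (1 + 1 / 2) ^ (1 / L) :=
          Real.rpow_le_rpow (by positivity) (by linarith) hL0
        have h2 := _root_.rpow_one_add_le_one_add_mul_self (s := 1 / 2) (by norm_num) hL0 (by linarith)
        linarith
      have hstep : 1.4 / n ≤ 1.75 * gL m n * (2 * (x - n) / (x + n)) := by
        rw [hgL]
        have e : 1.75 * (1 / (x - n)) * (2 * (x - n) / (x + n)) = 3.5 / (x + n) := by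
          field_simp; norm_num
        rw [e, div_le_div_iff₀ hn0 (by positivity)]
        linarith
      calc P * w / n ≤ 1.4 * 1 / n := by gcongr
        _ = 1.4 / n := by ring
        _ ≤ 1.75 * gL m n * (2 * (x - n) / (x + n)) := hstep
        _ ≤ 1.75 * gL m n * a := by gcongr
        _ ≤ _ := by
          gcongr
          nlinarith

end Sieve

open ArithmeticFunction in
/-- The concluding estimate of Section 3.5: the Perron error series is strictly
less than `(1/T)(40.22465 log log x + 58.11106 + 3.86972/log x
+ 5.21918 log x/√x − 1.85268/√x)`. -/
theorem truncated_perron_error_bound_sharp (x T : ℝ)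
    (hx : ∃ m : ℕ, 0 < m ∧ x = m + 1 / 2) (hx' : 3.5 ≤ x)
    (hT : 1 / Real.log (3 / 2) ≤ T) :
    (∑' n : ℕ, if 2 ≤ n then
        (x / n) ^ (1 / Real.log x) * (Λ n / (n * Real.log n)) *
          min 1 (1 / (T * |Real.log (x / n)|))
      else 0)
    < 1 / T * (40.22465 * Real.log (Real.log x) + 58.11106
        + 3.86972 / Real.log x + 5.21918 * Real.log x / Real.sqrt x
        - 1.85268 / Real.sqrt x) := by
  obtain ⟨m, hm, hxm⟩ := hx
  have hL := log_ge x hx'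
  have hx0 : 0 < x := by linarith
  have hmx : (m:ℝ) ≤ x := by linarith
  have hT0 : 0 < T := lt_of_lt_of_le (one_div_pos.mpr (Real.log_pos (by norm_num))) hT
  have hLL : 0 ≤ Real.log (Real.log x) := Real.log_nonneg (by linarith)
  have hbound : (∑' n : ℕ, if 2 ≤ n then
        (x / n) ^ (1 / Real.log x) * (Λ n / (n * Real.log n)) *
          min 1 (1 / (T * |Real.log (x / n)|))
      else 0) ≤ 1 / T * (6.71 * Real.log (1 + Real.log x) +
        (17 + 11.87 * Real.log (Real.log x)) + 1.75 * (17 + 11.87 * Real.log (Real.log x))) := by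
    refine Real.tsum_le_of_sum_range_le (fun n => ?_) (fun N => ?_)
    · split_ifs
      · have h1 : 0 ≤ Λ n := vonMangoldt_nonneg
        have h2 : 0 ≤ Real.log n := Real.log_natCast_nonneg n
        have h3 : 0 ≤ x / n := by positivity
        have h4 : 0 ≤ min 1 (1 / (T * |Real.log (x / n)|)) := le_min zero_le_one (by positivity)
        have h5 := Real.rpow_nonneg h3 (1 / Real.log x)
        positivity
      · exact le_rfl
    · have hR := gR_sum m N x hm hmx (by linarith)
      have hLs := gL_sum m N x hm hmx (by linarith)
      have hF := far_bound (Real.log x) (by linarith) N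
      calc _ ≤ ∑ n ∈ Finset.range N, 1 / T * (6.71 * (Λ n / ((n:ℝ) ^ (1 + 1 / Real.log x) * Real.log n)) + gR m n + 1.75 * gL m n) := by
            refine Finset.sum_le_sum fun n _ => ?_
            split_ifs with h
            · exact term_le m n x T hxm hx' hT0 h
            · have h1 : 0 ≤ Λ n := vonMangoldt_nonneg
              have h2 : 0 ≤ Real.log n := Real.log_natCast_nonneg n
              have h3 := gR_nonneg m n
              have h4 := gL_nonneg m n
              positivity
        _ = 1 / T * (6.71 * (∑ n ∈ Finset.range N, Λ n / ((n:ℝ) ^ (1 + 1 / Real.log x) * Real.log n)) + ∑ n ∈ Finset.range N, gR m n + 1.75 * ∑ n ∈ Finset.range N, gL m n) := by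
            rw [← Finset.mul_sum, Finset.sum_add_distrib, Finset.sum_add_distrib, ← Finset.mul_sum, ← Finset.mul_sum]
        _ ≤ _ := by gcongr
  refine hbound.trans_lt ?_
  apply mul_lt_mul_of_pos_left _ (one_div_pos.mpr hT0)
  have h1 : Real.log (1 + Real.log x) ≤ Real.log (Real.log x) + 0.8 := by
    have e : 1 + Real.log x = Real.log x * (1 + 1 / Real.log x) := by field_simp; ring
    have h0 : 0 < 1 / Real.log x := by positivity
    rw [e, Real.log_mul (by linarith) (by linarith)]
    have := Real.log_le_sub_one_of_pos (show 0 < 1 + 1 / Real.log x by linarith)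
    have h8 : 1 / Real.log x ≤ 0.8 := by rw [div_le_iff₀ (by linarith)]; linarith
    linarith
  have h2 : 0 < 3.86972 / Real.log x := by positivity
  have h3 : 1.85268 / Real.sqrt x ≤ 5.21918 * Real.log x / Real.sqrt x := by
    gcongr; linarith
  linarith
end
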